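/- arXiv:1605.00974 — 7 statements merged into one kernel-verified Lean document; each statement's English description precedes it below -/
import Mathlib

section
/- Grönwall-type light-cone estimate: let W : ℝ → ℝ be C², and let X_j and X̃_j, j ∈ {0,…,N}, be two solutions of the Newton chain on {0,…,N} with common constant right boundary X_N = X̃_N = N·φ_r, whose positions and velocities agree at t = 0 for all j ∈ {1,…,N−1}. Write U_j = X_{j+1} − X_j, Ũ_j = X̃_{j+1} − X̃_j, V_j = X_j', Ṽ_j = X̃_j'. Assume K := sup{|W''(u)| : u ∈ (u₁,u₂)} < ∞, where (u₁,u₂) is an open interval containing all values U_j(t) and Ũ_j(t) for all j and t ≥ 0, and assume M := sup_{t ≥ 0} |U_0(t) − Ũ_0(t)| < ∞. Then for all j ∈ {1,…,N−1} and all t ≥ 0: |U_j(t) − Ũ_j(t)| ≤ M·(2t√K)^{2j}/(2j)!·exp(2t√K), and |V_j(t) − Ṽ_j(t)| ≤ M·√(2K)·[ (2t√K)^{2j+1}/(2j+1)!·exp(2t√K) + (2t√K)^{2j−1}/(2j−1)!·exp(2t√K) ]. -/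
/-!
Write `d_j = U_j - Ũ_j` and `k = 2√K`. Since `W'` is `K`-Lipschitz on `(u₁,u₂)`, the equations of
motion give `|d_j''| ≤ K (|d_{j+1}| + 2 |d_j| + |d_{j-1}|)` for `1 ≤ j ≤ N-1`, where the term
`d_{j+1}` is absent for `j = N-1` and `d_j(0) = d_j'(0) = 0`. In particular
`|d_j''| ≤ k² max_{i ≥ j-1} |d_i|`.

Let `h_m(s) = ∑_{n ≥ 0} s^{m+2n}/(m+2n)!` (`coshTail`). Then `h_{m+1}' = h_m`, `h_{m+2} ≤ h_m` and
`h_m(s) ≤ s^m/m! · e^s` for `s ≥ 0`. On `[0,T]` all the `d_i` are bounded by some constant `C`, and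
integrating the differential inequality twice repeatedly yields
`|d_j(t)| ≤ M h_{2j}(kt) + C (kt)^{2n}/(2n)!` for every `n` (`picard_bound`): the first term
reproduces itself because `h_{2i} ≤ h_{2(j-1)}` for `i ≥ j-1`, and `h_{2j}'' = h_{2(j-1)}`.
Letting `n → ∞` gives `|d_j(t)| ≤ M h_{2j}(kt)` (`light_cone_bound`), hence the first estimate. The
second follows from one integration of `|V_j' - Ṽ_j'| ≤ K (|d_j| + |d_{j-1}|)`.
-/

open Set Filter

/-- The tail `∑_{n ≥ 0} s^(m+2n)/(m+2n)!` of the power series of `cosh` (`m` even) or `sinh`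
(`m` odd), defined by subtracting the leading terms one after the other. -/
noncomputable def coshTail : ℕ → ℝ → ℝ
  | 0, s => Real.cosh s
  | 1, s => Real.sinh s
  | (m + 2), s => coshTail m s - s ^ m / (m.factorial : ℝ)

lemma hasDerivAt_pow_div_factorial (m : ℕ) (s : ℝ) :
    HasDerivAt (fun s : ℝ => s ^ (m + 1) / ((m + 1).factorial : ℝ))
      (s ^ m / (m.factorial : ℝ)) s := by
  have h := (hasDerivAt_pow (m + 1) s).div_const ((m + 1).factorial : ℝ)
  refine h.congr_deriv ?_
  have : (m.factorial : ℝ) ≠ 0 := by positivity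
  rw [Nat.factorial_succ]
  push_cast
  have : (m : ℝ) + 1 ≠ 0 := by positivity
  field_simp

lemma coshTail_hasDerivAt : ∀ (m : ℕ) (s : ℝ),
    HasDerivAt (coshTail (m + 1)) (coshTail m s) s
  | 0, s => by
    have : coshTail (0 + 1) = Real.sinh := by funext x; simp [coshTail]
    rw [this]
    simpa [coshTail] using Real.hasDerivAt_sinh s
  | 1, s => by
    have : coshTail (1 + 1) = fun x => Real.cosh x - 1 := by funext x; simp [coshTail]
    rw [this]
    simpa [coshTail] using (Real.hasDerivAt_cosh s).sub_const 1
  | (m + 2), s => by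
    have : coshTail (m + 2 + 1)
        = fun x => coshTail (m + 1) x - x ^ (m + 1) / ((m + 1).factorial : ℝ) := by
      funext x; rw [show m + 2 + 1 = (m + 1) + 2 by ring, coshTail]
    rw [this, coshTail]
    exact (coshTail_hasDerivAt m s).sub (hasDerivAt_pow_div_factorial m s)

lemma coshTail_succ_zero : ∀ m : ℕ, coshTail (m + 1) 0 = 0
  | 0 => by simp [coshTail]
  | 1 => by simp [coshTail]
  | (m + 2) => by
    rw [show m + 2 + 1 = (m + 1) + 2 by ring, coshTail, coshTail_succ_zero m]; simp

/-- A function vanishing at `0` is bounded by any primitive, nonnegative at `0`, of a bound on its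
derivative. -/
lemma abs_le_of_deriv_bound {T : ℝ} {f f' B B' : ℝ → ℝ}
    (hf : ∀ t, 0 ≤ t → HasDerivWithinAt f (f' t) (Ici 0) t) (h0 : f 0 = 0) (hB0 : 0 ≤ B 0)
    (hB : ∀ t, HasDerivAt B (B' t) t)
    (hb : ∀ t, 0 ≤ t → t ≤ T → |f' t| ≤ B' t) :
    ∀ t, 0 ≤ t → t ≤ T → |f t| ≤ B t := by
  intro t ht htT
  refine image_norm_le_of_norm_deriv_right_le_deriv_boundary (f := f) (f' := f') (a := 0) (b := T)
    ?_ ?_ ?_ hB ?_ ⟨ht, htT⟩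
  · exact fun x hx => ((hf x hx.1).continuousWithinAt).mono Icc_subset_Ici_self
  · exact fun x hx => (hf x hx.1).mono (Ici_subset_Ici.2 hx.1)
  · simpa [h0] using hB0
  · exact fun x hx => hb x hx.1 hx.2.le

lemma coshTail_nonneg : ∀ (m : ℕ) (s : ℝ), 0 ≤ s → 0 ≤ coshTail m s
  | 0, s, _ => by simpa [coshTail] using (Real.cosh_pos s).le
  | (m + 1), s, hs => by
    refine (abs_nonneg _).trans (abs_le_of_deriv_bound (T := s) (f := fun _ => 0)
      (f' := fun _ => 0) (fun t _ => hasDerivWithinAt_const _ _ _) rfl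
      (coshTail_succ_zero m).ge (coshTail_hasDerivAt m) ?_ s hs le_rfl)
    intro t ht _
    simpa using coshTail_nonneg m t ht

lemma coshTail_le : ∀ (m : ℕ) (s : ℝ), 0 ≤ s →
    coshTail m s ≤ s ^ m / (m.factorial : ℝ) * Real.exp s
  | 0, s, hs => by
    simp only [coshTail, pow_zero, Nat.factorial_zero, Nat.cast_one, div_one, one_mul]
    rw [Real.cosh_eq]
    have : Real.exp (-s) ≤ Real.exp s := Real.exp_le_exp.2 (by linarith)
    linarith
  | (m + 1), s, hs => by
    refine (le_abs_self _).trans (abs_le_of_deriv_bound (T := s)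
      (fun t _ => (coshTail_hasDerivAt m t).hasDerivWithinAt) (coshTail_succ_zero m) ?_
      (fun t => (hasDerivAt_pow_div_factorial m t).mul (Real.hasDerivAt_exp t)) ?_ s hs le_rfl)
    · simp
    · intro t ht _
      rw [abs_of_nonneg (coshTail_nonneg m t ht)]
      have h1 := coshTail_le m t ht
      have : 0 ≤ t ^ (m + 1) / ((m + 1).factorial : ℝ) * Real.exp t := by positivity
      linarith

lemma coshTail_even_anti (s : ℝ) (hs : 0 ≤ s) : Antitone fun i : ℕ => coshTail (2 * i) s := by
  refine antitone_nat_of_succ_le fun i => ?_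
  rw [show 2 * (i + 1) = 2 * i + 2 by ring, coshTail]
  have : 0 ≤ s ^ (2 * i) / ((2 * i).factorial : ℝ) := by positivity
  linarith

/-- Composition with `t ↦ k t`, in the form used for integrating bounds in time. -/
lemma hasDerivAt_comp_mul {F F' : ℝ → ℝ} (hF : ∀ s, HasDerivAt F (F' s) s) (k t : ℝ) :
    HasDerivAt (fun t => F (k * t)) (k * F' (k * t)) t := by
  have h1 : HasDerivAt (fun t : ℝ => k * t) k t := by
    simpa using (hasDerivAt_id t).const_mul k
  have := (hF (k * t)).comp t h1
  rw [mul_comm]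
  exact this

/-- Iterated integration of the system of differential inequalities `|d_j''| ≤ k² max_{i≥j-1} |d_i|`
started from the crude bound `|d_i| ≤ C` on `[0,T]`. -/
lemma picard_bound {N : ℕ} {d p q : ℕ → ℝ → ℝ} {k M C T : ℝ} (hk : 0 ≤ k) (hM0 : 0 ≤ M)
    (hC0 : 0 ≤ C)
    (hd : ∀ j, 1 ≤ j → j < N → ∀ t, 0 ≤ t → HasDerivWithinAt (d j) (p j t) (Ici 0) t)
    (hp : ∀ j, 1 ≤ j → j < N → ∀ t, 0 ≤ t → HasDerivWithinAt (p j) (q j t) (Ici 0) t)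
    (hd0 : ∀ j, 1 ≤ j → j < N → d j 0 = 0) (hp0 : ∀ j, 1 ≤ j → j < N → p j 0 = 0)
    (hq : ∀ j, 1 ≤ j → j < N → ∀ t, 0 ≤ t → ∀ a, (∀ i < N, j - 1 ≤ i → |d i t| ≤ a) →
      |q j t| ≤ k ^ 2 * a)
    (hM : ∀ t, 0 ≤ t → |d 0 t| ≤ M)
    (hC : ∀ i < N, ∀ t, 0 ≤ t → t ≤ T → |d i t| ≤ C) (n : ℕ) :
    ∀ i < N, ∀ t, 0 ≤ t → t ≤ T → |d i t| ≤ M * coshTail (2 * i) (k * t)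
      + C * ((k * t) ^ (2 * n) / ((2 * n).factorial : ℝ)) := by
  induction n with
  | zero =>
    intro i hi t ht htT
    have h1 := hC i hi t ht htT
    have h2 := mul_nonneg hM0 (coshTail_nonneg (2 * i) (k * t) (by positivity))
    simp only [mul_zero, pow_zero, Nat.factorial_zero, Nat.cast_one, div_one, mul_one]
    linarith
  | succ n ih =>
    intro i hi t ht htT
    rcases i with _ | j
    · have h1 := hM t ht
      have h2 : M * 1 ≤ M * coshTail (2 * 0) (k * t) := by
        refine mul_le_mul_of_nonneg_left ?_ hM0
        simp [coshTail]
      have h3 : 0 ≤ C * ((k * t) ^ (2 * (n + 1)) / ((2 * (n + 1)).factorial : ℝ)) := by positivity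
      linarith
    · -- `G m` is the bound with both indices shifted by `m`, so that `(G (m+1))' = k * G m`.
      let G : ℕ → ℝ → ℝ := fun m t => M * coshTail (2 * j + m) (k * t)
        + C * ((k * t) ^ (2 * n + m) / ((2 * n + m).factorial : ℝ))
      have hG : ∀ m t, HasDerivAt (G (m + 1)) (k * G m t) t := by
        intro m t
        have h1 := (hasDerivAt_comp_mul (coshTail_hasDerivAt (2 * j + m)) k t).const_mul M
        have h2 := (hasDerivAt_comp_mul (hasDerivAt_pow_div_factorial (2 * n + m)) k t).const_mul C
        refine (h1.add h2).congr_deriv ?_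
        simp only [G]; ring
      have hG0 : ∀ m, 0 ≤ G (m + 1) 0 := by
        intro m
        have := coshTail_succ_zero (2 * j + m)
        simp only [G, mul_zero, ← add_assoc, this]
        simp
      have hq' : ∀ t, 0 ≤ t → t ≤ T → |q (j + 1) t| ≤ k * (k * G 0 t) := by
        intro t ht htT
        have := hq (j + 1) (by omega) hi t ht (G 0 t) ?_
        · linarith [this, show k ^ 2 * G 0 t = k * (k * G 0 t) by ring]
        · intro i hiN hji
          refine (ih i hiN t ht htT).trans ?_
          have := coshTail_even_anti (k * t) (by positivity) (show j ≤ i by omega)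
          have := mul_le_mul_of_nonneg_left this hM0
          simp only [G, add_zero]
          linarith
      have hp' := abs_le_of_deriv_bound (T := T) (hp (j + 1) (by omega) hi)
        (hp0 (j + 1) (by omega) hi) (B := fun t => k * G 1 t)
        (mul_nonneg hk (hG0 0)) (fun t => (hG 0 t).const_mul k) hq'
      have hd' := abs_le_of_deriv_bound (T := T) (hd (j + 1) (by omega) hi)
        (hd0 (j + 1) (by omega) hi) (hG0 1) (hG 1) hp'
      exact hd' t ht htT

lemma light_cone_bound {N : ℕ} {d p q : ℕ → ℝ → ℝ} {k M : ℝ} (hk : 0 ≤ k)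
    (hd : ∀ j, 1 ≤ j → j < N → ∀ t, 0 ≤ t → HasDerivWithinAt (d j) (p j t) (Ici 0) t)
    (hp : ∀ j, 1 ≤ j → j < N → ∀ t, 0 ≤ t → HasDerivWithinAt (p j) (q j t) (Ici 0) t)
    (hd0 : ∀ j, 1 ≤ j → j < N → d j 0 = 0) (hp0 : ∀ j, 1 ≤ j → j < N → p j 0 = 0)
    (hq : ∀ j, 1 ≤ j → j < N → ∀ t, 0 ≤ t → ∀ a, (∀ i < N, j - 1 ≤ i → |d i t| ≤ a) →
      |q j t| ≤ k ^ 2 * a)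
    (hM : ∀ t, 0 ≤ t → |d 0 t| ≤ M) :
    ∀ i < N, ∀ t, 0 ≤ t → |d i t| ≤ M * coshTail (2 * i) (k * t) := by
  intro i hi T hT
  have hM0 : 0 ≤ M := (abs_nonneg _).trans (hM 0 le_rfl)
  have hc : ∀ i, ∃ c, 0 ≤ c ∧ (i < N → ∀ t, 0 ≤ t → t ≤ T → |d i t| ≤ c) := by
    intro i
    rcases Nat.eq_zero_or_pos i with rfl | hi0
    · exact ⟨M, hM0, fun _ t ht _ => hM t ht⟩
    by_cases hiN : i < N
    · have hcont : ContinuousOn (d i) (Icc 0 T) := fun t ht =>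
        ((hd i hi0 hiN t ht.1).continuousWithinAt).mono Icc_subset_Ici_self
      obtain ⟨c, hc⟩ := isCompact_Icc.exists_bound_of_continuousOn hcont
      exact ⟨c, (norm_nonneg _).trans (hc 0 ⟨le_rfl, hT⟩), fun _ t ht htT => hc t ⟨ht, htT⟩⟩
    · exact ⟨0, le_rfl, fun h => absurd h hiN⟩
  choose c hc0 hc using hc
  have hbound := fun n => picard_bound (C := ∑ i ∈ Finset.range N, c i) (T := T) hk hM0
    (Finset.sum_nonneg fun i _ => hc0 i) hd hp hd0 hp0 hq hM
    (fun i hi t ht htT => (hc i hi t ht htT).trans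
      (Finset.single_le_sum (fun i _ => hc0 i) (Finset.mem_range.2 hi))) n i hi T hT le_rfl
  have hlim := (FloorSemiring.tendsto_pow_div_factorial_atTop (k * T)).comp
    (tendsto_id.const_mul_atTop' (show 0 < 2 by norm_num))
  have hlim2 := (hlim.const_mul (∑ i ∈ Finset.range N, c i)).const_add
    (M * coshTail (2 * i) (k * T))
  rw [mul_zero, add_zero] at hlim2
  exact ge_of_tendsto' hlim2 hbound

/-- **Grönwall-type light-cone estimate.** Let `X` and `X'` be two solutions of the
Newton chain on `{0,…,N}` with common constant right boundary `X_N = X'_N = N φ_r`,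
agreeing (positions and velocities) at `t = 0` for `j ∈ {1,…,N−1}`.  If
`|W''| ≤ K` on an open interval `(u₁,u₂)` containing all the values `U_j(t)`,
`Ũ_j(t)`, and `|U_0(t) − Ũ_0(t)| ≤ M` for all `t ≥ 0`, then for `j ∈ {1,…,N−1}`
and `t ≥ 0`:
`|U_j(t) − Ũ_j(t)| ≤ M (2t√K)^{2j}/(2j)! · e^{2t√K}` and
`|V_j(t) − Ṽ_j(t)| ≤ M √(2K) [(2t√K)^{2j+1}/(2j+1)! + (2t√K)^{2j−1}/(2j−1)!] e^{2t√K}`. -/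
theorem gronwall_light_cone_estimate
    (N : ℕ) (hN : 1 ≤ N) (W : ℝ → ℝ) (hW : ContDiff ℝ 2 W) (φr : ℝ)
    (X X' : ℕ → ℝ → ℝ)
    (hsm : ∀ j ≤ N, ContDiffOn ℝ 2 (X j) (Set.Ici 0) ∧ ContDiffOn ℝ 2 (X' j) (Set.Ici 0))
    (hbdy : ∀ t ∈ Set.Ici (0 : ℝ), X N t = (N : ℝ) * φr ∧ X' N t = (N : ℝ) * φr)
    (heq : ∀ j, 1 ≤ j → j ≤ N - 1 → ∀ t ∈ Set.Ici (0 : ℝ),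
      derivWithin (derivWithin (X j) (Set.Ici 0)) (Set.Ici 0) t
        = deriv W (X (j + 1) t - X j t) - deriv W (X j t - X (j - 1) t))
    (heq' : ∀ j, 1 ≤ j → j ≤ N - 1 → ∀ t ∈ Set.Ici (0 : ℝ),
      derivWithin (derivWithin (X' j) (Set.Ici 0)) (Set.Ici 0) t
        = deriv W (X' (j + 1) t - X' j t) - deriv W (X' j t - X' (j - 1) t))
    (hinit : ∀ j, 1 ≤ j → j ≤ N - 1 →
      X j 0 = X' j 0 ∧ derivWithin (X j) (Set.Ici 0) 0 = derivWithin (X' j) (Set.Ici 0) 0)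
    (u₁ u₂ : ℝ)
    (hU : ∀ j < N, ∀ t ∈ Set.Ici (0 : ℝ),
      X (j + 1) t - X j t ∈ Set.Ioo u₁ u₂ ∧ X' (j + 1) t - X' j t ∈ Set.Ioo u₁ u₂)
    (K : ℝ) (hK : ∀ u ∈ Set.Ioo u₁ u₂, |deriv (deriv W) u| ≤ K)
    (M : ℝ) (hM : ∀ t ∈ Set.Ici (0 : ℝ),
      |(X 1 t - X 0 t) - (X' 1 t - X' 0 t)| ≤ M) :
    ∀ j, 1 ≤ j → j ≤ N - 1 → ∀ t ∈ Set.Ici (0 : ℝ),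
      |(X (j + 1) t - X j t) - (X' (j + 1) t - X' j t)|
        ≤ M * (2 * t * Real.sqrt K) ^ (2 * j) / (Nat.factorial (2 * j) : ℝ)
            * Real.exp (2 * t * Real.sqrt K) ∧
      |derivWithin (X j) (Set.Ici 0) t - derivWithin (X' j) (Set.Ici 0) t|
        ≤ M * Real.sqrt (2 * K) *
            ((2 * t * Real.sqrt K) ^ (2 * j + 1) / (Nat.factorial (2 * j + 1) : ℝ)
                * Real.exp (2 * t * Real.sqrt K)
              + (2 * t * Real.sqrt K) ^ (2 * j - 1) / (Nat.factorial (2 * j - 1) : ℝ)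
                * Real.exp (2 * t * Real.sqrt K)) := by
  have hKL : ∀ a ∈ Ioo u₁ u₂, ∀ b ∈ Ioo u₁ u₂, |deriv W a - deriv W b| ≤ K * |a - b| := by
    intro a ha b hb
    have hdW : Differentiable ℝ (deriv W) :=
      (((contDiff_succ_iff_deriv (n := 1)).1
        (by rw [one_add_one_eq_two]; exact hW)).2.2).differentiable one_ne_zero
    exact Convex.norm_image_sub_le_of_norm_deriv_le (f := deriv W)
      (fun x _ => hdW x) (fun x hx => hK x hx) (convex_Ioo u₁ u₂) hb ha
  have hK0 : 0 ≤ K := (abs_nonneg _).trans (hK _ (hU 0 hN 0 self_mem_Ici).1)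
  have hM0 : 0 ≤ M := (abs_nonneg _).trans (hM 0 self_mem_Ici)
  -- First and second time derivatives of a `C²` function on the half line.
  have hder : ∀ f : ℝ → ℝ, ContDiffOn ℝ 2 f (Ici 0) → ∀ t, 0 ≤ t →
      HasDerivWithinAt f (derivWithin f (Ici 0) t) (Ici 0) t ∧
      HasDerivWithinAt (derivWithin f (Ici 0))
        (derivWithin (derivWithin f (Ici 0)) (Ici 0) t) (Ici 0) t := by
    intro f hf t ht
    have h1 := (hf.differentiableOn two_ne_zero) t ht
    have h2 : ContDiffOn ℝ 1 (derivWithin f (Ici 0)) (Ici 0) :=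
      hf.derivWithin (uniqueDiffOn_Ici 0) (by norm_num)
    exact ⟨h1.hasDerivWithinAt, ((h2.differentiableOn one_ne_zero) t ht).hasDerivWithinAt⟩
  have hN1 : ∀ f : ℝ → ℝ, (∀ t ∈ Ici (0 : ℝ), f t = N * φr) → ∀ t ∈ Ici (0 : ℝ),
      derivWithin f (Ici 0) t = 0 := by
    intro f hf t ht
    rw [derivWithin_congr hf (hf t ht)]; simp
  have hN2 : ∀ f : ℝ → ℝ, (∀ t ∈ Ici (0 : ℝ), f t = N * φr) → ∀ t ∈ Ici (0 : ℝ),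
      derivWithin (derivWithin f (Ici 0)) (Ici 0) t = 0 := by
    intro f hf t ht
    rw [derivWithin_congr (hN1 f hf) (hN1 f hf t ht)]; simp
  let A : ℕ → ℝ → ℝ := fun j t => derivWithin (derivWithin (X j) (Ici 0)) (Ici 0) t
    - derivWithin (derivWithin (X' j) (Ici 0)) (Ici 0) t
  let V : ℕ → ℝ → ℝ := fun j t => derivWithin (X j) (Ici 0) t - derivWithin (X' j) (Ici 0) t
  let d : ℕ → ℝ → ℝ := fun j t => (X (j + 1) t - X j t) - (X' (j + 1) t - X' j t)
  have hV : ∀ j ≤ N, ∀ t, 0 ≤ t → HasDerivWithinAt (V j) (A j t) (Ici 0) t := fun j hj t ht =>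
    (hder _ (hsm j hj).1 t ht).2.sub (hder _ (hsm j hj).2 t ht).2
  have hA : ∀ j, 1 ≤ j → j < N → ∀ t, 0 ≤ t → |A j t| ≤ K * |d j t| + K * |d (j - 1) t| := by
    intro j hj hjN t ht
    have e1 := heq j hj (by omega) t ht
    have e2 := heq' j hj (by omega) t ht
    have b1 := hKL _ (hU j hjN t ht).1 _ (hU j hjN t ht).2
    have b2 := hKL _ (hU (j - 1) (by omega) t ht).1 _ (hU (j - 1) (by omega) t ht).2
    have e3 : j - 1 + 1 = j := by omega
    simp only [A, d, e1, e2, e3] at b2 ⊢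
    rw [sub_sub_sub_comm]
    exact (abs_sub _ _).trans (add_le_add b1 b2)
  have hAN : ∀ t, 0 ≤ t → A N t = 0 := by
    intro t ht
    simp only [A]
    rw [hN2 _ (fun t ht => (hbdy t ht).1) t ht, hN2 _ (fun t ht => (hbdy t ht).2) t ht, sub_zero]
  have hX0 : ∀ j, 1 ≤ j → j ≤ N → X j 0 = X' j 0 ∧ V j 0 = 0 := by
    intro j hj hjN
    rcases hjN.eq_or_lt with rfl | hlt
    · refine ⟨(hbdy 0 self_mem_Ici).1.trans (hbdy 0 self_mem_Ici).2.symm, ?_⟩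
      simp only [V]
      rw [hN1 _ (fun t ht => (hbdy t ht).1) 0 self_mem_Ici,
        hN1 _ (fun t ht => (hbdy t ht).2) 0 self_mem_Ici, sub_zero]
    · exact ⟨(hinit j hj (by omega)).1, sub_eq_zero.2 (hinit j hj (by omega)).2⟩
  have hk2 : (2 * √K) ^ 2 = 4 * K := by rw [mul_pow, Real.sq_sqrt hK0]; norm_num
  have hcone := light_cone_bound (N := N) (d := d) (p := fun j t => V (j + 1) t - V j t)
    (q := fun j t => A (j + 1) t - A j t) (k := 2 * √K) (M := M) (by positivity)
    (by
      intro j hj hjN t ht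
      have h1 := (hder _ (hsm (j + 1) hjN).1 t ht).1.sub (hder _ (hsm j hjN.le).1 t ht).1
      have h2 := (hder _ (hsm (j + 1) hjN).2 t ht).1.sub (hder _ (hsm j hjN.le).2 t ht).1
      refine (h1.sub h2).congr_deriv ?_
      simp only [V]; ring)
    (fun j hj hjN t ht => (hV (j + 1) hjN t ht).sub (hV j hjN.le t ht))
    (by
      intro j hj hjN
      simp only [d, (hX0 j hj hjN.le).1, (hX0 (j + 1) (by omega) hjN).1, sub_self])
    (by
      intro j hj hjN
      simp only [(hX0 j hj hjN.le).2, (hX0 (j + 1) (by omega) hjN).2, sub_self])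
    (by
      intro j hj hjN t ht a ha
      have ha0 : 0 ≤ a := (abs_nonneg _).trans (ha j hjN (by omega))
      have b : ∀ i, 1 ≤ i → i < N → j ≤ i → |A i t| ≤ 2 * (K * a) := by
        intro i hi hiN hji
        have h1 := hA i hi hiN t ht
        have h2 := mul_le_mul_of_nonneg_left (ha i hiN (by omega)) hK0
        have h3 := mul_le_mul_of_nonneg_left (ha (i - 1) (by omega) (by omega)) hK0
        linarith
      have b1 : |A (j + 1) t| ≤ 2 * (K * a) := by
        rcases (show j + 1 ≤ N from hjN).eq_or_lt with h | h
        · rw [h, hAN t ht, abs_zero]; positivity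
        · exact b (j + 1) (by omega) h (by omega)
      rw [hk2]
      have := abs_sub (A (j + 1) t) (A j t)
      have := b j hj hjN le_rfl
      linarith)
    hM
  intro j hj hjN t ht
  have ht0 : 0 ≤ t := ht
  have hs : 2 * √K * t = 2 * t * √K := by ring
  have hs0 : 0 ≤ 2 * √K * t := by positivity
  rw [← hs]
  constructor
  · refine (hcone j (by omega) t ht).trans ?_
    have := mul_le_mul_of_nonneg_left (coshTail_le (2 * j) _ hs0) hM0
    refine this.trans (le_of_eq ?_)
    ring
  · obtain ⟨i, rfl⟩ : ∃ i, j = i + 1 := ⟨j - 1, by omega⟩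
    -- The prefactor `√K / 2` comes from `K = (√K / 2) * (2 * √K)`.
    have hvel := abs_le_of_deriv_bound (T := t) (hV (i + 1) (by omega))
      (hX0 (i + 1) (by omega) (by omega)).2
      (B := fun t => M * (√K / 2) * (coshTail (2 * (i + 1) + 1) (2 * √K * t)
        + coshTail (2 * i + 1) (2 * √K * t)))
      (by simp only [mul_zero, coshTail_succ_zero]; simp)
      (fun t => ((hasDerivAt_comp_mul (coshTail_hasDerivAt (2 * (i + 1))) (2 * √K) t).add
        (hasDerivAt_comp_mul (coshTail_hasDerivAt (2 * i)) (2 * √K) t)).const_mul _)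
      (by
        intro t ht _
        refine (hA (i + 1) (by omega) (by omega) t ht).trans ?_
        have h1 := mul_le_mul_of_nonneg_left (hcone (i + 1) (by omega) t ht) hK0
        have h2 := mul_le_mul_of_nonneg_left (hcone i (by omega) t ht) hK0
        refine (add_le_add h1 h2).trans (le_of_eq ?_)
        nth_rewrite 1 [← Real.mul_self_sqrt hK0]
        nth_rewrite 4 [← Real.mul_self_sqrt hK0]
        ring)
      t ht le_rfl
    refine hvel.trans ?_
    have hsq : √K / 2 ≤ √(2 * K) := by
      have h1 : √K ≤ √(2 * K) := Real.sqrt_le_sqrt (by linarith)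
      have h2 := Real.sqrt_nonneg K
      linarith
    have e : 2 * (i + 1) - 1 = 2 * i + 1 := by omega
    rw [e]
    have n1 := coshTail_nonneg (2 * (i + 1) + 1) _ hs0
    have n2 := coshTail_nonneg (2 * i + 1) _ hs0
    refine mul_le_mul (mul_le_mul_of_nonneg_left hsq hM0)
      (add_le_add (coshTail_le _ _ hs0) (coshTail_le _ _ hs0)) (by positivity) (by positivity)
end

section
/- Macroscopic finite speed of propagation (light cone): let W : ℝ → ℝ be C² with W''(u) ≥ α > 0 for all u, and let T > 0. For each N, let X^N_j and X̃^N_j, j ∈ {0,…,N}, be two solutions of the Newton chain on {0,…,N} with common constant right boundary X^N_N = X̃^N_N = N·φ_r, whose positions and velocities coincide at t = 0 for all j ∈ {1,…,N−1}; write U^N_j = X^N_{j+1} − X^N_j, V^N_j = (X^N_j)', and similarly Ũ^N_j, Ṽ^N_j. Assume: (i) there is C ≥ 0 with sup_{t ≥ 0} ( Σ_{j=0}^{N−1} W(U^N_j(t)) + (1/2) Σ_{j=0}^{N−1} (V^N_j(t))² ) ≤ C·N for all N; (ii) K := sup{|W''(u)| : u ∈ (u₁,u₂)} < ∞, where u₁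 (resp. u₂) is the infimum (resp. supremum) over all N, all j, and all t ∈ [0,NT] of min(U^N_j(t), Ũ^N_j(t)) (resp. max(U^N_j(t), Ũ^N_j(t))). Set c = e²·√K. Then for every x ∈ (0,1) and every τ < x/c with τ ≤ T: N · sup{ |U^N_j(t) − Ũ^N_j(t)| : 0 ≤ t < Nτ, j > Nx } → 0 as N → ∞, and sup{ |V^N_j(t) − Ṽ^N_j(t)| : 0 ≤ t < Nτ, j > Nx } → 0 as N → ∞. -/
/-!
Let `D_j = X_j − X̃_j`, so that `D_j'' = a_j (D_{j+1} − D_j) − a_{j−1} (D_j − D_{j−1})` with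
`|a_j| ≤ K` by the mean value theorem, while `D_N = 0` and the interior sites start from zero
Cauchy data. Only site `0` can feed a discrepancy into the chain, and the constraint
`U, Ũ ∈ [u₁,u₂]` gives `|D_j| ≤ N (u₂ − u₁)` by summing from the right boundary.

Each double time integration of `|D_j''| ≤ 4K max |D_{j+i}|`, `|i| ≤ 1`, gains a factor and uses up
one site, so with `b = 2√K` one gets `|D_j(t)| ≤ N (u₂ − u₁) (bt)^{2k} / (2k)!` for every `k ≤ j`
(`light_cone_estimate`). At `k = j > Nx` and `t < Nτ`, the condition `τ e² √K < x` makes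
`bt ≤ e⁻² s` with `s = 2Nx`, and `s^m / m! ≤ eˢ` turns the bound into
`N (u₂ − u₁) e^{−2Nx}` (`pow_div_factorial_le_exp_sub`), which beats every power of `N`.
-/

open Set Filter

/-- One time integration of a monomial bound; the factor `b` on the derivative makes the
estimate reproduce itself with `m` replaced by `m + 1`. -/
lemma abs_le_of_abs_deriv_le_monomial {f f' : ℝ → ℝ} {A b S : ℝ} (m : ℕ)
    (hf : ∀ t ∈ Ici (0 : ℝ), HasDerivWithinAt f (f' t) (Ici 0) t) (h0 : f 0 = 0)
    (hb : ∀ t ∈ Icc 0 S, |f' t| ≤ A * b * ((b * t) ^ m / (m.factorial : ℝ))) :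
    ∀ t ∈ Icc 0 S, |f t| ≤ A * ((b * t) ^ (m + 1) / ((m + 1).factorial : ℝ)) := by
  have hB : ∀ t : ℝ, HasDerivAt (fun t : ℝ => A * ((b * t) ^ (m + 1) / ((m + 1).factorial : ℝ)))
      (A * b * ((b * t) ^ m / (m.factorial : ℝ))) t := by
    intro t
    have h := ((((hasDerivAt_id t).const_mul b).pow (m + 1)).div_const
      ((m + 1).factorial : ℝ)).const_mul A
    refine h.congr_deriv ?_
    have : (m.factorial : ℝ) ≠ 0 := by positivity
    have : ((m : ℝ) + 1) ≠ 0 := by positivity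
    simp only [Nat.factorial_succ, id, Nat.add_sub_cancel]
    push_cast
    field_simp
  intro t ht
  have := image_norm_le_of_norm_deriv_right_le_deriv_boundary' (f := f) (f' := f') (a := 0) (b := S)
    (B := fun t : ℝ => A * ((b * t) ^ (m + 1) / ((m + 1).factorial : ℝ)))
    (B' := fun t : ℝ => A * b * ((b * t) ^ m / (m.factorial : ℝ)))
    (fun t ht => ((hf t ht.1).continuousWithinAt).mono Icc_subset_Ici_self)
    (fun t ht => (hf t ht.1).mono (Ici_subset_Ici.2 ht.1))
    (by simp [h0])
    (fun t _ => (hB t).continuousAt.continuousWithinAt)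
    (fun t _ => (hB t).hasDerivWithinAt)
    (fun t ht => by simpa using hb t ⟨ht.1, ht.2.le⟩) ht
  simpa using this

/-- Propagation estimate for a chain of second-order differential inequalities with vanishing
Cauchy data at the sites `1, …, N − 1` and vanishing right boundary: at distance `k` from the left
boundary the solution is at most the `2k`-th term of the exponential series. -/
lemma light_cone_estimate {N : ℕ} {S b M : ℝ} {D E F : ℕ → ℝ → ℝ}
    (hD : ∀ j, 1 ≤ j → j < N → ∀ t ∈ Ici (0 : ℝ), HasDerivWithinAt (D j) (E j t) (Ici 0) t)
    (hE : ∀ j, 1 ≤ j → j < N → ∀ t ∈ Ici (0 : ℝ), HasDerivWithinAt (E j) (F j t) (Ici 0) t)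
    (hD0 : ∀ j, 1 ≤ j → j < N → D j 0 = 0) (hE0 : ∀ j, 1 ≤ j → j < N → E j 0 = 0)
    (hN : ∀ t ∈ Icc 0 S, D N t = 0)
    (hF : ∀ j, 1 ≤ j → j < N → ∀ t ∈ Icc 0 S,
      |F j t| ≤ b ^ 2 / 4 * (|D (j + 1) t| + 2 * |D j t| + |D (j - 1) t|))
    (hb : 0 ≤ b) (hM0 : 0 ≤ M) (hM : ∀ j ≤ N, ∀ t ∈ Icc 0 S, |D j t| ≤ M) (k : ℕ) :
    (∀ j, k ≤ j → j ≤ N → ∀ t ∈ Icc 0 S,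
      |D j t| ≤ M * ((b * t) ^ (2 * k) / ((2 * k).factorial : ℝ))) ∧
    (∀ j, k + 1 ≤ j → j < N → ∀ t ∈ Icc 0 S,
      |E j t| ≤ M * b * ((b * t) ^ (2 * k + 1) / ((2 * k + 1).factorial : ℝ))) := by
  have step : ∀ k : ℕ, (∀ j, k ≤ j → j ≤ N → ∀ t ∈ Icc 0 S,
      |D j t| ≤ M * ((b * t) ^ (2 * k) / ((2 * k).factorial : ℝ))) →
      (∀ j, k + 1 ≤ j → j < N → ∀ t ∈ Icc 0 S,
      |E j t| ≤ M * b * ((b * t) ^ (2 * k + 1) / ((2 * k + 1).factorial : ℝ))) := by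
    intro k ih j hj hjN
    refine abs_le_of_abs_deriv_le_monomial (2 * k) (hE j (by omega) hjN) (hE0 j (by omega) hjN) ?_
    intro t ht
    have h1 := ih (j + 1) (by omega) (by omega) t ht
    have h2 := ih j (by omega) (by omega) t ht
    have h3 := ih (j - 1) (by omega) (by omega) t ht
    refine (hF j (by omega) hjN t ht).trans ?_
    generalize (b * t) ^ (2 * k) / ((2 * k).factorial : ℝ) = q at *
    calc b ^ 2 / 4 * (|D (j + 1) t| + 2 * |D j t| + |D (j - 1) t|)
        ≤ b ^ 2 / 4 * (M * q + 2 * (M * q) + M * q) := by gcongr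
      _ = M * b * b * q := by ring
  have main : ∀ k : ℕ, (∀ j, k ≤ j → j ≤ N → ∀ t ∈ Icc 0 S,
      |D j t| ≤ M * ((b * t) ^ (2 * k) / ((2 * k).factorial : ℝ))) := by
    intro k
    induction k with
    | zero => intro j _ hj t ht; simpa using hM j hj t ht
    | succ k ih =>
      intro j hj hjN
      rcases hjN.eq_or_lt with rfl | hjN
      · intro t ht
        have := mul_nonneg hb ht.1
        rw [hN t ht, abs_zero]
        positivity
      · exact abs_le_of_abs_deriv_le_monomial (2 * k + 1) (hD j (by omega) hjN)
          (hD0 j (by omega) hjN) (step k ih j hj hjN)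
  exact ⟨main k, step k (main k)⟩

lemma pow_div_factorial_le_exp_sub {y s : ℝ} (hy : 0 ≤ y) (hs : 0 ≤ s)
    (h : y ≤ s * Real.exp (-2)) (m : ℕ) :
    y ^ m / (m.factorial : ℝ) ≤ Real.exp (s - 2 * m) := by
  calc y ^ m / (m.factorial : ℝ) ≤ (s * Real.exp (-2)) ^ m / (m.factorial : ℝ) := by gcongr
    _ = s ^ m / (m.factorial : ℝ) * Real.exp (-2) ^ m := by rw [mul_pow]; ring
    _ ≤ Real.exp s * Real.exp (-2) ^ m := by
        gcongr
        exact Real.pow_div_factorial_le_exp s hs m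
    _ = Real.exp (s - 2 * m) := by
        rw [← Real.exp_nat_mul, ← Real.exp_add]; congr 1; ring

/-- **Macroscopic finite speed of propagation (light cone).**
Let `W ∈ C²` with `W'' ≥ α > 0` and `T > 0`.  For each `N`, let `X^N`, `X̃^N` be two
solutions of the Newton chain on `{0,…,N}` with common constant right boundary
`N·φ_r`, coinciding at `t = 0` for `j ∈ {1,…,N−1}`.  Assume a uniform energy bound
`Σ W(U^N_j) + (1/2) Σ (V^N_j)² ≤ C N`, that all values `U^N_j(t)`, `Ũ^N_j(t)`
(`t ∈ [0,NT]`) lie in `[u₁,u₂]` and `|W''| ≤ K` there.  Set `c = e²√K`.  Then for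
every `x ∈ (0,1)` and `τ < x/c`, `τ ≤ T`,
`N · sup{|U^N_j(t) − Ũ^N_j(t)| : 0 ≤ t < Nτ, j > Nx} → 0` and
`sup{|V^N_j(t) − Ṽ^N_j(t)| : 0 ≤ t < Nτ, j > Nx} → 0` as `N → ∞`. -/
theorem macroscopic_light_cone
    (W : ℝ → ℝ) (hW : ContDiff ℝ 2 W)
    (α : ℝ) (hα : 0 < α) (hconv : ∀ u : ℝ, α ≤ deriv (deriv W) u)
    (T : ℝ) (hT : 0 < T) (φr : ℝ)
    (X X' : ℕ → ℕ → ℝ → ℝ)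
    (hsm : ∀ N : ℕ, ∀ j ≤ N,
      ContDiffOn ℝ 2 (X N j) (Set.Ici 0) ∧ ContDiffOn ℝ 2 (X' N j) (Set.Ici 0))
    (hbdy : ∀ N : ℕ, ∀ t ∈ Set.Ici (0 : ℝ),
      X N N t = (N : ℝ) * φr ∧ X' N N t = (N : ℝ) * φr)
    (heq : ∀ N : ℕ, ∀ j, 1 ≤ j → j ≤ N - 1 → ∀ t ∈ Set.Ici (0 : ℝ),
      derivWithin (derivWithin (X N j) (Set.Ici 0)) (Set.Ici 0) t
        = deriv W (X N (j + 1) t - X N j t) - deriv W (X N j t - X N (j - 1) t))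
    (heq' : ∀ N : ℕ, ∀ j, 1 ≤ j → j ≤ N - 1 → ∀ t ∈ Set.Ici (0 : ℝ),
      derivWithin (derivWithin (X' N j) (Set.Ici 0)) (Set.Ici 0) t
        = deriv W (X' N (j + 1) t - X' N j t) - deriv W (X' N j t - X' N (j - 1) t))
    (hinit : ∀ N : ℕ, ∀ j, 1 ≤ j → j ≤ N - 1 →
      X N j 0 = X' N j 0 ∧
      derivWithin (X N j) (Set.Ici 0) 0 = derivWithin (X' N j) (Set.Ici 0) 0)
    (C : ℝ) (hC : 0 ≤ C)
    (hE : ∀ N : ℕ, ∀ t ∈ Set.Ici (0 : ℝ),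
      (∑ j ∈ Finset.range N, W (X N (j + 1) t - X N j t))
        + (1 / 2) * ∑ j ∈ Finset.range N, (derivWithin (X N j) (Set.Ici 0) t) ^ 2
      ≤ C * N)
    (u₁ u₂ : ℝ)
    (hU : ∀ N : ℕ, ∀ j < N, ∀ t ∈ Set.Icc (0 : ℝ) ((N : ℝ) * T),
      X N (j + 1) t - X N j t ∈ Set.Icc u₁ u₂ ∧
      X' N (j + 1) t - X' N j t ∈ Set.Icc u₁ u₂)
    (K : ℝ) (hK : ∀ u ∈ Set.Icc u₁ u₂, |deriv (deriv W) u| ≤ K) :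
    ∀ x ∈ Set.Ioo (0 : ℝ) 1, ∀ τ : ℝ, τ < x / (Real.exp 2 * Real.sqrt K) → τ ≤ T →
      Tendsto (fun N : ℕ => (N : ℝ) *
          ⨆ (j : ℕ) (_ : (N : ℝ) * x < (j : ℝ) ∧ j < N) (t : ℝ)
            (_ : t ∈ Set.Ico (0 : ℝ) ((N : ℝ) * τ)),
            |(X N (j + 1) t - X N j t) - (X' N (j + 1) t - X' N j t)|)
        atTop (nhds 0) ∧
      Tendsto (fun N : ℕ =>
          ⨆ (j : ℕ) (_ : (N : ℝ) * x < (j : ℝ) ∧ j < N) (t : ℝ)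
            (_ : t ∈ Set.Ico (0 : ℝ) ((N : ℝ) * τ)),
            |derivWithin (X N j) (Set.Ici 0) t - derivWithin (X' N j) (Set.Ici 0) t|)
        atTop (nhds 0) := by
  intro x hx τ hτ hτT
  obtain ⟨hx0, hx1⟩ := hx
  have hL : 0 ≤ u₂ - u₁ := by
    have := (hU 1 0 (by norm_num) 0 ⟨le_rfl, by simpa using hT.le⟩).1
    linarith [this.1, this.2]
  have hKpos : 0 < K :=
    hα.trans_le ((hconv u₁).trans ((le_abs_self _).trans (hK u₁ ⟨le_rfl, by linarith⟩)))
  set L := u₂ - u₁ with hLdef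
  set b := 2 * Real.sqrt K with hbdef
  have hb : 0 < b := by positivity
  have hb2 : b ^ 2 / 4 = K := by rw [hbdef, mul_pow, Real.sq_sqrt hKpos.le]; ring
  have hWlip : ∀ p ∈ Icc u₁ u₂, ∀ q ∈ Icc u₁ u₂, |deriv W p - deriv W q| ≤ K * |p - q| := by
    intro p hp q hq
    have hd : Differentiable ℝ (deriv W) :=
      ((contDiff_succ_iff_deriv (n := 1)).1 hW).2.2.differentiable (by norm_num)
    exact (convex_Icc u₁ u₂).norm_image_sub_le_of_norm_deriv_le (fun z _ => hd z)
      (fun z hz => hK z hz) hq hp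
  have hder : ∀ f : ℝ → ℝ, ContDiffOn ℝ 2 f (Ici 0) → ∀ t ∈ Ici (0 : ℝ),
      HasDerivWithinAt f (derivWithin f (Ici 0) t) (Ici 0) t ∧
      HasDerivWithinAt (derivWithin f (Ici 0))
        (derivWithin (derivWithin f (Ici 0)) (Ici 0) t) (Ici 0) t := by
    intro f hf t ht
    refine ⟨(hf.differentiableOn (by norm_num) t ht).hasDerivWithinAt, ?_⟩
    have h1 : ContDiffOn ℝ 1 (derivWithin f (Ici 0)) (Ici 0) :=
      hf.derivWithin (uniqueDiffOn_Ici 0) (by norm_num)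
    exact (h1.differentiableOn (by norm_num) t ht).hasDerivWithinAt
  have cone := fun N : ℕ => light_cone_estimate (N := N) (S := N * T) (b := b) (M := N * L)
    (D := fun j t => X N j t - X' N j t)
    (E := fun j t => derivWithin (X N j) (Ici 0) t - derivWithin (X' N j) (Ici 0) t)
    (F := fun j t => derivWithin (derivWithin (X N j) (Ici 0)) (Ici 0) t
      - derivWithin (derivWithin (X' N j) (Ici 0)) (Ici 0) t)
    (fun j _ hj t ht => (hder _ (hsm N j hj.le).1 t ht).1.sub (hder _ (hsm N j hj.le).2 t ht).1)
    (fun j _ hj t ht => (hder _ (hsm N j hj.le).1 t ht).2.sub (hder _ (hsm N j hj.le).2 t ht).2)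
    (fun j h1 hj => by simp [(hinit N j h1 (by omega)).1])
    (fun j h1 hj => by simp [(hinit N j h1 (by omega)).2])
    (fun t ht => by simp [(hbdy N t ht.1).1, (hbdy N t ht.1).2])
    (by
      intro j h1 hj t ht
      obtain ⟨i, rfl⟩ : ∃ i, j = i + 1 := ⟨j - 1, by omega⟩
      simp only [heq N (i + 1) h1 (by omega) t ht.1, heq' N (i + 1) h1 (by omega) t ht.1,
        Nat.add_sub_cancel, hb2]
      have hp := hU N (i + 1) hj t ht
      have hq := hU N i (by omega) t ht
      have e1 := hWlip _ hp.1 _ hp.2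
      have e2 := hWlip _ hq.1 _ hq.2
      have a1 : |X N (i + 1 + 1) t - X N (i + 1) t - (X' N (i + 1 + 1) t - X' N (i + 1) t)| ≤
          |X N (i + 1 + 1) t - X' N (i + 1 + 1) t| + |X N (i + 1) t - X' N (i + 1) t| := by
        rw [sub_sub_sub_comm]; exact abs_sub _ _
      have a2 : |X N (i + 1) t - X N i t - (X' N (i + 1) t - X' N i t)| ≤
          |X N (i + 1) t - X' N (i + 1) t| + |X N i t - X' N i t| := by
        rw [sub_sub_sub_comm]; exact abs_sub _ _
      rw [sub_sub_sub_comm]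
      refine (abs_sub _ _).trans ((add_le_add e1 e2).trans ?_)
      rw [← mul_add]
      exact mul_le_mul_of_nonneg_left (by linarith) hKpos.le)
    hb.le (by positivity)
    (by
      intro j hj t ht
      -- summing the strain differences from the right boundary
      have key : ∀ i j : ℕ, j + i = N → |X N j t - X' N j t| ≤ i * L := by
        intro i
        induction i with
        | zero =>
          intro j hj
          obtain rfl : j = N := by omega
          simp [(hbdy j t ht.1).1, (hbdy j t ht.1).2]
        | succ i ih =>
          intro j hj
          have h1 := abs_le.1 (ih (j + 1) (by omega))
          have h2 := hU N j (by omega) t ht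
          push_cast
          rw [abs_le]
          constructor <;> linarith [h1.1, h1.2, h2.1.1, h2.1.2, h2.2.1, h2.2.2]
      refine (key (N - j) j (by omega)).trans ?_
      gcongr
      omega)
  have hτ' : Real.sqrt K * τ ≤ x * Real.exp (-2) := by
    rw [lt_div_iff₀ (by positivity)] at hτ
    rw [Real.exp_neg, ← div_eq_mul_inv, le_div_iff₀ (Real.exp_pos _)]
    linarith
  have hbt : ∀ N : ℕ, ∀ t ∈ Ico (0 : ℝ) (N * τ), b * t ≤ (2 * N * x) * Real.exp (-2) := by
    intro N t ht
    calc b * t ≤ b * (N * τ) := by gcongr; exact ht.2.le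
      _ = 2 * N * (Real.sqrt K * τ) := by rw [hbdef]; ring
      _ ≤ 2 * N * (x * Real.exp (-2)) := by gcongr
      _ = _ := by ring
  have hmem : ∀ N : ℕ, ∀ t ∈ Ico (0 : ℝ) (N * τ), t ∈ Icc (0 : ℝ) (N * T) :=
    fun N t ht => ⟨ht.1, ht.2.le.trans (by gcongr)⟩
  set r := Real.exp (-(2 * x)) with hr
  have hrN : ∀ N : ℕ, Real.exp (-(2 * N * x)) = r ^ N := by
    intro N; rw [hr, ← Real.exp_nat_mul]; congr 1; ring
  have hr1 : |r| < 1 := by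
    rw [abs_of_pos (Real.exp_pos _), Real.exp_lt_one_iff]; linarith
  have hr0 : 0 < r := Real.exp_pos _
  have hDb : ∀ N j : ℕ, (N : ℝ) * x < j → j ≤ N → ∀ t ∈ Ico (0 : ℝ) (N * τ),
      |X N j t - X' N j t| ≤ N * L * r ^ N := by
    intro N j hj hjN t ht
    refine ((cone N j).1 j le_rfl hjN t (hmem N t ht)).trans ?_
    gcongr
    refine (pow_div_factorial_le_exp_sub (mul_nonneg hb.le ht.1) (by positivity)
      (hbt N t ht) _).trans ?_
    rw [← hrN, Real.exp_le_exp]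
    push_cast
    linarith
  have hVb : ∀ N j : ℕ, (N : ℝ) * x < j → j < N → ∀ t ∈ Ico (0 : ℝ) (N * τ),
      |derivWithin (X N j) (Ici 0) t - derivWithin (X' N j) (Ici 0) t|
        ≤ N * L * b * (Real.exp 2 * r ^ N) := by
    intro N j hj hjN t ht
    have hj0 : (0 : ℝ) < j := lt_of_le_of_lt (by positivity) hj
    obtain ⟨i, rfl⟩ : ∃ i, j = i + 1 :=
      Nat.exists_eq_add_one_of_ne_zero (by exact_mod_cast hj0.ne')
    refine ((cone N i).2 (i + 1) le_rfl hjN t (hmem N t ht)).trans ?_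
    gcongr
    refine (pow_div_factorial_le_exp_sub (mul_nonneg hb.le ht.1) (by positivity)
      (hbt N t ht) _).trans ?_
    rw [← hrN, ← Real.exp_add, Real.exp_le_exp]
    push_cast at hj ⊢
    linarith
  constructor
  · have hlim : Tendsto (fun N : ℕ => 2 * L * ((N : ℝ) ^ 2 * r ^ N)) atTop (nhds 0) := by
      simpa using (tendsto_pow_const_mul_const_pow_of_abs_lt_one 2 hr1).const_mul (2 * L)
    refine squeeze_zero (fun N => ?_) (fun N => ?_) hlim
    · exact mul_nonneg (Nat.cast_nonneg N) (Real.iSup_nonneg fun j => Real.iSup_nonneg fun _ =>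
        Real.iSup_nonneg fun t => Real.iSup_nonneg fun _ => abs_nonneg _)
    · have h0 : 0 ≤ 2 * (N * L * r ^ N) := by positivity
      calc _ ≤ (N : ℝ) * (2 * (N * L * r ^ N)) := by
            refine mul_le_mul_of_nonneg_left ?_ (Nat.cast_nonneg N)
            refine Real.iSup_le (fun j => Real.iSup_le (fun hj => Real.iSup_le (fun t =>
              Real.iSup_le (fun ht => ?_) h0) h0) h0) h0
            have h1 := hDb N j hj.1 hj.2.le t ht
            have h2 := hDb N (j + 1) (by push_cast; linarith [hj.1]) hj.2 t ht
            rw [sub_sub_sub_comm]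
            exact (abs_sub _ _).trans (by linarith)
        _ = _ := by ring
  · have hlim : Tendsto (fun N : ℕ => L * b * Real.exp 2 * ((N : ℝ) ^ 1 * r ^ N))
        atTop (nhds 0) := by
      simpa using (tendsto_pow_const_mul_const_pow_of_abs_lt_one 1 hr1).const_mul
        (L * b * Real.exp 2)
    refine squeeze_zero (fun N => ?_) (fun N => ?_) hlim
    · exact Real.iSup_nonneg fun j => Real.iSup_nonneg fun _ =>
        Real.iSup_nonneg fun t => Real.iSup_nonneg fun _ => abs_nonneg _
    · have h0 : 0 ≤ N * L * b * (Real.exp 2 * r ^ N) := by positivity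
      calc _ ≤ N * L * b * (Real.exp 2 * r ^ N) :=
            Real.iSup_le (fun j => Real.iSup_le (fun hj => Real.iSup_le (fun t =>
              Real.iSup_le (fun ht => hVb N j hj.1 hj.2 t ht) h0) h0) h0) h0
        _ = _ := by ring
end

section
/- No uniform l^∞ control without regularity of the initial data: consider the linear periodic chain, i.e. for each N ≥ 1 functions U^N_j, V^N_j : [0,∞) → ℝ indexed by j ∈ ℤ/2Nℤ satisfying (U^N_j)'(t) = V^N_{j+1}(t) − V^N_j(t) and (V^N_j)'(t) = U^N_j(t) − U^N_{j−1}(t) (the Newton chain with W(u) = u²/2 and periodic boundary conditions). For every τ₀ > 0 there exists, for each N, a choice of initial data with max_j |U^N_j(0)| ≤ 1 and max_j |V^N_j(0)| ≤ 1 such that max_j |U^N_j(N·τ₀)| → +∞ as N → ∞. -/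
open Set Filter

/-!
Data that is small in `l^∞` can focus. The plane waves `U_j = cos (jθ + ω(t - T))`,
`V_j = cos ((j - 1/2)θ + ω(t - T))` with `ω = 2 sin (θ/2)` solve the chain, and are
`2N`-periodic when `θ ∈ (π/N)ℤ`. Superpose `R` of them, with `θ_m = π + π q m / N` and
`T = N τ₀`. At time `T` and site `0` all phases agree and the sum equals `R`.

At time `0` the phases are `x θ_m - T ω_m`. Near `θ = π` the dispersion relation is
`ω_m = 2 cos (π q m / 2N) = 2 - (π q m / 2N)² + O((qm/N)⁴)`, so up to a small error the phases are
quadratic in `m` with leading coefficient `γ = τ₀ π² q² / (4N)`. With `q` of order `√N`, the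
coefficient `γ` is of order `1/R`, and Weyl differencing (`sq_norm_weylSum_le`) bounds the
quadratic exponential sum by `O(R^{3/4})`, uniformly in the linear coefficient
(`abs_sum_cos_quadratic_le`). Dividing by this bound yields data of size at most `1` whose
solution reaches a multiple of `R^{1/4}` at time `T` (`exists_focusing`). Since `R` is arbitrary,
letting it grow slowly with `N` gives the theorem.
-/

/-- A `2N`-periodic solution of the linear chain on `[0, ∞)` with initial data bounded by `1`. -/
def IsUnitSolution (N : ℕ) (u v : ℤ → ℝ → ℝ) : Prop :=
  (∀ (j : ℤ) (t : ℝ), u (j + 2 * (N : ℤ)) t = u j t ∧ v (j + 2 * (N : ℤ)) t = v j t) ∧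
  (∀ (j : ℤ), ∀ t ∈ Set.Ici (0 : ℝ),
    HasDerivWithinAt (u j) (v (j + 1) t - v j t) (Set.Ici 0) t ∧
    HasDerivWithinAt (v j) (u j t - u (j - 1) t) (Set.Ici 0) t) ∧
  (∀ j : ℤ, |u j 0| ≤ 1 ∧ |v j 0| ≤ 1)

/-! ### Weyl differencing -/

/-- The square of a sum of unit complex numbers, grouped by the difference `h` of the indices. -/
lemma sq_norm_sum_unit (z : ℕ → ℂ) (hz : ∀ m, ‖z m‖ = 1) (R : ℕ) :
    ‖∑ m ∈ Finset.range R, z m‖ ^ 2 + R =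
      2 * (∑ h ∈ Finset.range R, ∑ k ∈ Finset.range (R - h),
        z (h + k) * (starRingEnd ℂ) (z k)).re := by
  have hflip : ∑ h ∈ Finset.range R, ∑ k ∈ Finset.range (R - h),
        z (h + k) * (starRingEnd ℂ) (z k) =
      ∑ m ∈ Finset.range R, ∑ k ∈ Finset.range (m + 1), z m * (starRingEnd ℂ) (z k) := by
    rw [← Finset.sum_range_diag_flip R (fun h k => z (h + k) * (starRingEnd ℂ) (z k))]
    refine Finset.sum_congr rfl fun m _ => ?_
    rw [← Finset.sum_range_reflect]
    refine Finset.sum_congr rfl fun k hk => ?_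
    have hk' : k < m + 1 := Finset.mem_range.1 hk
    have h1 : m + 1 - 1 - k + (m - (m + 1 - 1 - k)) = m := by omega
    have h2 : m - (m + 1 - 1 - k) = k := by omega
    rw [h1, h2]
  rw [hflip]
  clear hflip
  induction R with
  | zero => simp
  | succ R ih =>
    rw [Finset.sum_range_succ, Finset.sum_range_succ (fun m => ∑ k ∈ Finset.range (m + 1), _),
      Finset.sum_range_succ (fun k => z R * _), Complex.add_re, mul_add, ← ih,
      ← Finset.mul_sum, ← map_sum]
    generalize ∑ m ∈ Finset.range R, z m = S
    have h1 := hz R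
    have h2 : ‖z R‖ ^ 2 = 1 := by rw [h1]; norm_num
    rw [Complex.sq_norm, Complex.normSq_apply] at h2
    simp only [Complex.sq_norm, Complex.normSq_apply, Complex.add_re, Complex.add_im,
      Complex.mul_re, Complex.conj_re, Complex.conj_im]
    push_cast
    linarith

/-- The quadratic phase `e^{i(b + am + γm²)}`. -/
noncomputable def quadPhase (a b γ : ℝ) (m : ℕ) : ℂ :=
  Complex.exp (((b + a * m + γ * m ^ 2 : ℝ) : ℂ) * Complex.I)

lemma norm_geom_sum_exp_le (x : ℝ) (hx : 0 < Real.sin x) (K : ℕ) :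
    ‖∑ k ∈ Finset.range K, Complex.exp (((2 * x : ℝ) : ℂ) * Complex.I) ^ k‖ ≤ 1 / Real.sin x := by
  set w := Complex.exp (((2 * x : ℝ) : ℂ) * Complex.I) with hw
  have hn : ‖w‖ = 1 := Complex.norm_exp_ofReal_mul_I _
  have hd : ‖w - 1‖ = 2 * Real.sin x := by
    have h : ‖w - 1‖ ^ 2 = (2 * Real.sin x) ^ 2 := by
      rw [Complex.sq_norm, Complex.normSq_apply, hw, Complex.sub_re, Complex.sub_im,
        Complex.exp_ofReal_mul_I_re, Complex.exp_ofReal_mul_I_im, Complex.one_re, Complex.one_im,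
        Real.cos_two_mul, Real.sin_two_mul]
      have := Real.sin_sq_add_cos_sq x
      have h3 : Real.cos x ^ 2 = 1 - Real.sin x ^ 2 := by linarith
      ring_nf
      rw [show Real.cos x ^ 4 = (Real.cos x ^ 2) ^ 2 by ring, h3]
      ring
    exact (pow_left_inj₀ (norm_nonneg _) (by positivity) two_ne_zero).1 h
  have hne : w ≠ 1 := by
    intro h
    rw [h] at hd
    simp at hd
    linarith
  rw [geom_sum_eq hne, norm_div, hd, div_le_div_iff₀ (by positivity) hx]
  have : ‖w ^ K - 1‖ ≤ 2 := by
    refine (norm_sub_le _ _).trans ?_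
    rw [norm_pow, hn]
    norm_num
  nlinarith

lemma sum_inv_le_two_sqrt (R : ℕ) : ∑ h ∈ Finset.range R, 1 / ((h : ℝ) + 1) ≤ 2 * √R := by
  induction R with
  | zero => simp
  | succ R ih =>
    rw [Finset.sum_range_succ]
    have h0 := Real.sqrt_nonneg (R : ℝ)
    have h1 : (0 : ℝ) ≤ R := Nat.cast_nonneg R
    have h2 := Real.sq_sqrt h1
    have h3 := Real.sq_sqrt (show (0 : ℝ) ≤ ((R + 1 : ℕ) : ℝ) by positivity)
    have h4 := Real.sqrt_nonneg ((R + 1 : ℕ) : ℝ)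
    have h5 : √(R : ℝ) ≤ √((R + 1 : ℕ) : ℝ) := Real.sqrt_le_sqrt (by push_cast; linarith)
    have h6 : 1 ≤ √((R + 1 : ℕ) : ℝ) := Real.one_le_sqrt.2 (by push_cast; linarith)
    push_cast at *
    set s := √(R : ℝ)
    set s' := √((R : ℝ) + 1)
    have : 1 / ((R : ℝ) + 1) ≤ 2 * (s' - s) := by
      rw [div_le_iff₀ (by linarith), ← h3]
      -- `(s' - s)(s' + s) = 1` and `s' + s ≤ 2 s' ≤ 2 s'²`
      have h7 : (s' - s) * (s' + s) = 1 := by nlinarith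
      nlinarith [mul_nonneg (sub_nonneg.2 h5) (sub_nonneg.2 h6),
        mul_nonneg (mul_nonneg (sub_nonneg.2 h5) h4) (sub_nonneg.2 h6),
        mul_nonneg (sub_nonneg.2 h5) (sub_nonneg.2 h5)]
    linarith

/-- Weyl's bound: after differencing, the inner sums are geometric with ratio `e^{2iγh}`, and the
two-sided condition on `γ` gives `sin (γh) ≥ h / (4R)` for `h < R`. -/
lemma sq_norm_weylSum_le (a b γ : ℝ) (R : ℕ) (h1 : Real.pi / (8 * R) ≤ γ)
    (h2 : γ ≤ Real.pi / (2 * R)) :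
    ‖∑ m ∈ Finset.range R, quadPhase a b γ m‖ ^ 2 ≤ R + 16 * R * √R := by
  rcases Nat.eq_zero_or_pos R with rfl | hR
  · simp
  have hRr : (0 : ℝ) < R := Nat.cast_pos.2 hR
  have hpi := Real.pi_pos
  have hγ : 0 < γ := lt_of_lt_of_le (by positivity) h1
  have hunit : ∀ m, ‖quadPhase a b γ m‖ = 1 := fun m => Complex.norm_exp_ofReal_mul_I _
  have key := sq_norm_sum_unit _ hunit R
  have hinner : ∀ h : ℕ, ‖∑ k ∈ Finset.range (R - h),
      quadPhase a b γ (h + k) * (starRingEnd ℂ) (quadPhase a b γ k)‖ =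
      ‖∑ k ∈ Finset.range (R - h), Complex.exp (((2 * (γ * h) : ℝ) : ℂ) * Complex.I) ^ k‖ := by
    intro h
    have : ∀ k ∈ Finset.range (R - h),
        quadPhase a b γ (h + k) * (starRingEnd ℂ) (quadPhase a b γ k) =
        Complex.exp (((a * h + γ * h ^ 2 : ℝ) : ℂ) * Complex.I) *
          Complex.exp (((2 * (γ * h) : ℝ) : ℂ) * Complex.I) ^ k := by
      intro k _
      rw [quadPhase, quadPhase, ← Complex.exp_conj, ← Complex.exp_nat_mul, ← Complex.exp_add,
        ← Complex.exp_add]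
      congr 1
      simp only [map_mul, Complex.conj_ofReal, Complex.conj_I]
      push_cast
      ring
    rw [Finset.sum_congr rfl this, ← Finset.mul_sum, norm_mul, Complex.norm_exp_ofReal_mul_I,
      one_mul]
  have hbound : ∀ h ∈ Finset.range (R - 1), ‖∑ k ∈ Finset.range (R - (h + 1)),
      quadPhase a b γ (h + 1 + k) * (starRingEnd ℂ) (quadPhase a b γ k)‖ ≤
      4 * R * (1 / ((h : ℝ) + 1)) := by
    intro h hh
    have hlt : h + 1 < R := by
      have := Finset.mem_range.1 hh
      omega
    have hltr : ((h : ℝ) + 1) ≤ R := by exact_mod_cast hlt.le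
    rw [hinner]
    have hpos : (0 : ℝ) < (h : ℝ) + 1 := by positivity
    have hx : γ * ((h + 1 : ℕ) : ℝ) ≤ Real.pi / 2 := by
      push_cast
      calc γ * ((h : ℝ) + 1) ≤ Real.pi / (2 * R) * R := by gcongr
        _ = Real.pi / 2 := by field_simp
    have hs := Real.mul_le_sin (x := γ * ((h + 1 : ℕ) : ℝ)) (by positivity) hx
    have hs' : ((h : ℝ) + 1) / (4 * R) ≤ Real.sin (γ * ((h + 1 : ℕ) : ℝ)) := by
      refine le_trans ?_ hs
      push_cast
      calc ((h : ℝ) + 1) / (4 * R) = 2 / Real.pi * (Real.pi / (8 * R) * ((h : ℝ) + 1)) := by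
            field_simp; norm_num
        _ ≤ _ := by gcongr
    have hq : 0 < ((h : ℝ) + 1) / (4 * R) := by positivity
    refine (norm_geom_sum_exp_le _ (hq.trans_le hs') _).trans ?_
    calc 1 / Real.sin (γ * ((h + 1 : ℕ) : ℝ)) ≤ 1 / (((h : ℝ) + 1) / (4 * R)) :=
          one_div_le_one_div_of_le hq hs'
      _ = _ := by field_simp
  have hzero : ‖∑ k ∈ Finset.range (R - 0),
      quadPhase a b γ (0 + k) * (starRingEnd ℂ) (quadPhase a b γ k)‖ ≤ R := by
    rw [hinner]
    simp
  have htot : ‖∑ h ∈ Finset.range R, ∑ k ∈ Finset.range (R - h),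
        quadPhase a b γ (h + k) * (starRingEnd ℂ) (quadPhase a b γ k)‖ ≤ R + 8 * R * √R := by
    obtain ⟨r, rfl⟩ : ∃ r, R = r + 1 := ⟨R - 1, by omega⟩
    rw [Finset.sum_range_succ']
    refine (norm_add_le _ _).trans ?_
    have hA := (norm_sum_le _ _).trans (Finset.sum_le_sum hbound)
    rw [← Finset.mul_sum] at hA
    have hB := sum_inv_le_two_sqrt r
    have hC : √(r : ℝ) ≤ √((r + 1 : ℕ) : ℝ) := Real.sqrt_le_sqrt (by push_cast; linarith)
    have hD : 4 * ((r + 1 : ℕ) : ℝ) * ∑ h ∈ Finset.range (r + 1 - 1), 1 / ((h : ℝ) + 1) ≤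
        8 * ((r + 1 : ℕ) : ℝ) * √((r + 1 : ℕ) : ℝ) := by
      rw [Nat.add_sub_cancel]
      nlinarith
    rw [Nat.add_sub_cancel] at hA hD
    linarith
  have := (Complex.re_le_norm _).trans htot
  linarith

lemma abs_sum_cos_quadratic_le (a b γ : ℝ) (k : ℕ)
    (h1 : Real.pi / (8 * ((k ^ 4 : ℕ) : ℝ)) ≤ γ)
    (h2 : γ ≤ Real.pi / (2 * ((k ^ 4 : ℕ) : ℝ))) :
    |∑ m ∈ Finset.range (k ^ 4), Real.cos (b + a * m + γ * m ^ 2)| ≤ 5 * (k : ℝ) ^ 3 := by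
  have h := sq_norm_weylSum_le a b γ (k ^ 4) h1 h2
  have hre : (∑ m ∈ Finset.range (k ^ 4), quadPhase a b γ m).re =
      ∑ m ∈ Finset.range (k ^ 4), Real.cos (b + a * m + γ * m ^ 2) := by
    rw [Complex.re_sum]
    exact Finset.sum_congr rfl fun m _ => Complex.exp_ofReal_mul_I_re _
  rw [← hre]
  refine (Complex.abs_re_le_norm _).trans ?_
  refine le_of_sq_le_sq ?_ (by positivity)
  refine h.trans ?_
  push_cast
  rw [show ((k : ℝ) ^ 4) = ((k : ℝ) ^ 2) ^ 2 by ring, Real.sqrt_sq (by positivity)]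
  rcases Nat.eq_zero_or_pos k with rfl | hk
  · simp
  have hk1 : (1 : ℝ) ≤ k := by exact_mod_cast hk
  have : (k : ℝ) ^ 4 ≤ (k : ℝ) ^ 6 := pow_le_pow_right₀ hk1 (by norm_num)
  nlinarith [pow_nonneg (zero_le_one.trans hk1) 6]

/-! ### Superposition of plane waves -/

/-- `A ∑_m cos (xθ_m + 2 sin (θ_m/2) (t - T))`. Evaluated at `x = j` and at `x = j - 1/2` it gives
the components `U_j` and `V_j` of a solution of the chain. -/
noncomputable def wave (A T : ℝ) (θ : ℕ → ℝ) (R : ℕ) (x t : ℝ) : ℝ :=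
  A * ∑ m ∈ Finset.range R, Real.cos (x * θ m + 2 * Real.sin (θ m / 2) * (t - T))

lemma hasDerivAt_wave (A T : ℝ) (θ : ℕ → ℝ) (R : ℕ) (x t : ℝ) :
    HasDerivAt (wave A T θ R x) (wave A T θ R (x + 1 / 2) t - wave A T θ R (x - 1 / 2) t) t := by
  have h : HasDerivAt (wave A T θ R x)
      (A * ∑ m ∈ Finset.range R, -Real.sin (x * θ m + 2 * Real.sin (θ m / 2) * (t - T)) *
        (2 * Real.sin (θ m / 2))) t := by
    refine HasDerivAt.const_mul A (HasDerivAt.fun_sum fun m _ => ?_)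
    refine HasDerivAt.cos ?_
    simpa using (((hasDerivAt_id t).sub_const T).const_mul (2 * Real.sin (θ m / 2))).const_add
      (x * θ m)
  convert h using 1
  rw [wave, wave, ← mul_sub, ← Finset.sum_sub_distrib]
  congr 1
  refine Finset.sum_congr rfl fun m _ => ?_
  rw [show (x + 1 / 2) * θ m + 2 * Real.sin (θ m / 2) * (t - T) =
      (x * θ m + 2 * Real.sin (θ m / 2) * (t - T)) + θ m / 2 by ring,
    show (x - 1 / 2) * θ m + 2 * Real.sin (θ m / 2) * (t - T) =
      (x * θ m + 2 * Real.sin (θ m / 2) * (t - T)) - θ m / 2 by ring, Real.cos_add, Real.cos_sub]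
  ring

lemma wave_periodic (A T : ℝ) (q N R : ℕ) (hN : 1 ≤ N) (x t : ℝ) :
    wave A T (fun m => Real.pi + Real.pi * q * m / N) R (x + 2 * N) t =
      wave A T (fun m => Real.pi + Real.pi * q * m / N) R x t := by
  have hN' : (N : ℝ) ≠ 0 := by positivity
  unfold wave
  congr 1
  refine Finset.sum_congr rfl fun m _ => ?_
  rw [← Real.cos_add_nat_mul_two_pi (x * _ + _) (N + q * m)]
  congr 1
  push_cast
  field_simp
  ring

lemma abs_cos_sub_cos_le' (x y : ℝ) : |Real.cos x - Real.cos y| ≤ |x - y| := by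
  have h := Real.lipschitzWith_cos.dist_le_mul x y
  simpa [Real.dist_eq] using h

/-- At time `0` the phases are quadratic with leading coefficient `γ = τπ²q²/(4N)`, up to an error
that changes the sum of the cosines by at most `1`; hence the normalisation `5k³ + 1 ≤ 6k³`. -/
lemma abs_wave_zero_le (τ : ℝ) (hτ : 0 < τ) (k q N : ℕ) (hk : 1 ≤ k) (hN : 1 ≤ N)
    (h1 : Real.pi / (8 * ((k ^ 4 : ℕ) : ℝ)) ≤ τ * Real.pi ^ 2 * q ^ 2 / (4 * N))
    (h2 : τ * Real.pi ^ 2 * q ^ 2 / (4 * N) ≤ Real.pi / (2 * ((k ^ 4 : ℕ) : ℝ)))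
    (h3 : 4 * ((k ^ 4 : ℕ) : ℝ) ^ 3 ≤ N * τ) (x : ℝ) :
    |wave (1 / (6 * (k : ℝ) ^ 3)) (N * τ) (fun m => Real.pi + Real.pi * q * m / N) (k ^ 4) x 0|
      ≤ 1 := by
  set γ := τ * Real.pi ^ 2 * q ^ 2 / (4 * N) with hγ
  have hk1 : (1 : ℝ) ≤ k := by exact_mod_cast hk
  have hN' : (0 : ℝ) < N := by exact_mod_cast hN
  have hpi := Real.pi_pos
  have hγ0 : 0 ≤ γ := by positivity
  have hmain := abs_sum_cos_quadratic_le (Real.pi * q * x / N) (x * Real.pi - 2 * (N * τ)) γ k h1 h2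
  have hR1 : (1 : ℝ) ≤ ((k ^ 4 : ℕ) : ℝ) := by exact_mod_cast Nat.one_le_pow _ _ hk
  set R := k ^ 4 with hR
  set T := (N : ℝ) * τ with hT
  have hT0 : 0 < T := by positivity
  have herr : ∀ m ∈ Finset.range R,
      |Real.cos (x * (Real.pi + Real.pi * q * m / N) +
          2 * Real.sin ((Real.pi + Real.pi * q * m / N) / 2) * (0 - T)) -
        Real.cos (x * Real.pi - 2 * T + Real.pi * q * x / N * m + γ * m ^ 2)| ≤ 1 / R := by
    intro m hm
    have hmR : (m : ℝ) ≤ R := by exact_mod_cast (Finset.mem_range.1 hm).le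
    refine (abs_cos_sub_cos_le' _ _).trans ?_
    set u := Real.pi * q * m / (2 * N) with hu
    have hu0 : 0 ≤ u := by positivity
    have hTu : T * u ^ 2 = γ * m ^ 2 := by
      rw [hT, hu, hγ]
      field_simp
      ring
    have hsin : Real.sin ((Real.pi + Real.pi * q * m / N) / 2) = Real.cos u := by
      rw [← Real.sin_pi_div_two_sub, ← Real.sin_pi_sub]
      congr 1
      rw [hu]
      field_simp
      ring
    have hγm : γ * m ^ 2 ≤ 2 * R := by
      calc γ * (m : ℝ) ^ 2 ≤ Real.pi / (2 * R) * (R : ℝ) ^ 2 := by gcongr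
        _ = Real.pi / 2 * R := by field_simp
        _ ≤ 2 * R := by
          have := Real.pi_le_four
          gcongr
          linarith
    have hR3 : (R : ℝ) ≤ (R : ℝ) ^ 3 := le_self_pow₀ hR1 (by norm_num)
    have hu1 : u ^ 2 ≤ 1 := by
      by_contra hcon
      push Not at hcon
      nlinarith
    have hu1' : |u| ≤ 1 := by rw [← sq_le_one_iff_abs_le_one]; exact hu1
    have hcos := Real.cos_bound hu1'
    rw [abs_of_nonneg hu0] at hcos
    rw [hsin, show x * (Real.pi + Real.pi * q * m / N) + 2 * Real.cos u * (0 - T) -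
        (x * Real.pi - 2 * T + Real.pi * q * x / N * m + γ * m ^ 2) =
        -(2 * T) * (Real.cos u - (1 - u ^ 2 / 2)) by rw [← hTu]; ring,
      abs_mul, abs_neg, abs_of_pos (by positivity : 0 < 2 * T)]
    calc 2 * T * |Real.cos u - (1 - u ^ 2 / 2)| ≤ 2 * T * (u ^ 4 * (5 / 96)) := by gcongr
      _ ≤ T * u ^ 4 := by nlinarith [mul_nonneg hT0.le (pow_nonneg hu0 4)]
      _ = (γ * m ^ 2) ^ 2 / T := by rw [← hTu]; field_simp
      _ ≤ (2 * R) ^ 2 / (4 * (R : ℝ) ^ 3) := by gcongr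
      _ = 1 / R := by field_simp; norm_num
  have hdiff := (Finset.abs_sum_le_sum_abs _ _).trans (Finset.sum_le_sum herr)
  rw [Finset.sum_sub_distrib, Finset.sum_const, Finset.card_range, nsmul_eq_mul,
    mul_one_div_cancel (by positivity)] at hdiff
  have hk3 : 1 ≤ (k : ℝ) ^ 3 := one_le_pow₀ hk1
  rw [wave, abs_mul, abs_of_pos (by positivity), one_div_mul_eq_div, div_le_one (by positivity)]
  have := abs_le.1 hdiff
  have := abs_le.1 hmain
  rw [abs_le]
  constructor <;> linarith

/-! ### Focusing solutions -/

/-- Here `q = ⌊√(2N / (πτR))⌋` is the largest integer with `γ ≤ π / (2R)`, where `R = k⁴`. -/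
lemma exists_focusing (τ : ℝ) (hτ : 0 < τ) (n : ℕ) :
    ∃ N₀ : ℕ, ∀ N : ℕ, N₀ ≤ N → ∃ u v : ℤ → ℝ → ℝ,
      IsUnitSolution N u v ∧ (n : ℝ) ≤ |u 0 (N * τ)| := by
  set k := 6 * n + 1 with hk
  set R : ℝ := ((k ^ 4 : ℕ) : ℝ) with hR
  have hk1 : 1 ≤ k := by omega
  have hk1' : (1 : ℝ) ≤ k := by exact_mod_cast hk1
  have hR1 : 1 ≤ R := by
    rw [hR]
    exact_mod_cast Nat.one_le_pow _ _ hk1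
  have hpi := Real.pi_pos
  obtain ⟨N₁, hN₁⟩ := exists_nat_ge (4 * R ^ 3 / τ)
  obtain ⟨N₂, hN₂⟩ := exists_nat_ge (Real.pi * τ * R / 2)
  refine ⟨N₁ + N₂ + 1, fun N hN => ?_⟩
  have hN1 : 1 ≤ N := by omega
  have hNr : (0 : ℝ) < N := by exact_mod_cast hN1
  have ha : 4 * R ^ 3 ≤ N * τ := by
    rw [← div_le_iff₀ hτ]
    exact hN₁.trans (by exact_mod_cast (by omega))
  have hb : Real.pi * τ * R / 2 ≤ N := hN₂.trans (by exact_mod_cast (by omega))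
  set y := 2 * N / (Real.pi * τ * R) with hy
  have hy1 : 1 ≤ y := by
    rw [hy, one_le_div (by positivity)]
    linarith
  set q := ⌊√y⌋₊ with hq
  have hs1 : 1 ≤ √y := Real.one_le_sqrt.2 hy1
  have hq1 : (q : ℝ) ≤ √y := Nat.floor_le (Real.sqrt_nonneg _)
  have hq2 : √y / 2 ≤ q := by
    have h1 : √y < q + 1 := Nat.lt_floor_add_one _
    have h2 : (1 : ℝ) ≤ q := by exact_mod_cast (Nat.one_le_floor_iff _).2 hs1
    linarith
  have hqy : (q : ℝ) ^ 2 ≤ y := by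
    rw [← Real.sq_sqrt (zero_le_one.trans hy1)]
    gcongr
  have hqy' : y / 4 ≤ (q : ℝ) ^ 2 := by
    have := pow_le_pow_left₀ (by positivity) hq2 2
    rw [div_pow, Real.sq_sqrt (zero_le_one.trans hy1)] at this
    linarith
  have h1 : Real.pi / (8 * R) ≤ τ * Real.pi ^ 2 * q ^ 2 / (4 * N) := by
    calc Real.pi / (8 * R) = τ * Real.pi ^ 2 * (y / 4) / (4 * N) := by
          rw [hy]; field_simp; norm_num
      _ ≤ _ := by gcongr
  have h2 : τ * Real.pi ^ 2 * q ^ 2 / (4 * N) ≤ Real.pi / (2 * R) := by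
    calc τ * Real.pi ^ 2 * q ^ 2 / (4 * N) ≤ τ * Real.pi ^ 2 * y / (4 * N) := by gcongr
      _ = _ := by rw [hy]; field_simp; norm_num
  have hbd := abs_wave_zero_le τ hτ k q N hk1 hN1 h1 h2 ha
  set W := wave (1 / (6 * (k : ℝ) ^ 3)) (N * τ) (fun m => Real.pi + Real.pi * q * m / N) (k ^ 4)
    with hW
  have hper : ∀ x t, W (x + 2 * N) t = W x t := fun x t => wave_periodic _ _ _ _ _ hN1 x t
  have hder : ∀ x t, HasDerivAt (W x) (W (x + 1 / 2) t - W (x - 1 / 2) t) t :=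
    fun x t => hasDerivAt_wave _ _ _ _ x t
  refine ⟨fun j t => W j t, fun j t => W (j - 1 / 2) t, ⟨fun j t => ⟨?_, ?_⟩,
    fun j t _ => ⟨?_, ?_⟩, fun j => ⟨hbd _, hbd _⟩⟩, ?_⟩
  · have h := hper j t
    push_cast
    exact h
  · have h := hper (j - 1 / 2) t
    rw [show (j : ℝ) - 1 / 2 + 2 * N = j + 2 * N - 1 / 2 by ring] at h
    push_cast
    exact h
  · have h := (hder j t).hasDerivWithinAt (s := Set.Ici 0)
    rw [show (j : ℝ) + 1 / 2 = j + 1 - 1 / 2 by ring] at h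
    push_cast
    exact h
  · have h := (hder (j - 1 / 2) t).hasDerivWithinAt (s := Set.Ici 0)
    rw [show (j : ℝ) - 1 / 2 + 1 / 2 = j by ring,
      show (j : ℝ) - 1 / 2 - 1 / 2 = j - 1 by ring] at h
    push_cast
    exact h
  · have hval : W ((0 : ℤ) : ℝ) (N * τ) = k / 6 := by
      simp only [hW, wave]
      simp
      field_simp
    beta_reduce
    rw [hval, abs_of_nonneg (by positivity), hk]
    push_cast
    linarith

lemma isUnitSolution_zero (N : ℕ) : IsUnitSolution N (fun _ _ => 0) (fun _ _ => 0) := by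
  refine ⟨fun _ _ => ⟨rfl, rfl⟩, fun _ t _ => ⟨?_, ?_⟩, fun _ => by simp⟩ <;>
  simpa using hasDerivWithinAt_const t (Set.Ici (0 : ℝ)) (0 : ℝ)

/-- The iterated real supremum dominates each of its terms; indices outside the range contribute
the value `0` of an empty supremum. -/
lemma le_biSup_range (f : ℕ → ℝ) (hf : ∀ j, 0 ≤ f j) (M i : ℕ) (hi : i < M) :
    f i ≤ ⨆ j ∈ Finset.range M, f j := by
  have hbdd : BddAbove (Set.range fun j => ⨆ (_ : j ∈ Finset.range M), f j) := by
    refine ⟨∑ j ∈ Finset.range M, f j, ?_⟩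
    rintro _ ⟨j, rfl⟩
    refine Real.iSup_le (fun hj => ?_) (Finset.sum_nonneg fun j _ => hf j)
    exact Finset.single_le_sum (fun j _ => hf j) hj
  refine le_ciSup_of_le hbdd i ?_
  have : i ∈ Finset.range M := Finset.mem_range.2 hi
  simp [hi]

/-- **No uniform `l^∞` control without regularity of the initial data.**
For the linear periodic chain `(U_j)' = V_{j+1} − V_j`, `(V_j)' = U_j − U_{j−1}`
on `ℤ/2Nℤ`, for every `τ₀ > 0` there exist, for each `N ≥ 1`, solutions with
initial data bounded by `1` in `l^∞` whose gradient `max_j |U^N_j(Nτ₀)|` blows up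
as `N → ∞`. -/
theorem no_uniform_linfty_bound (τ₀ : ℝ) (hτ₀ : 0 < τ₀) :
    ∃ U V : ℕ → ℤ → ℝ → ℝ,
      (∀ N : ℕ, 1 ≤ N →
        (∀ (j : ℤ) (t : ℝ),
          U N (j + 2 * (N : ℤ)) t = U N j t ∧ V N (j + 2 * (N : ℤ)) t = V N j t) ∧
        (∀ (j : ℤ), ∀ t ∈ Set.Ici (0 : ℝ),
          HasDerivWithinAt (U N j) (V N (j + 1) t - V N j t) (Set.Ici 0) t ∧
          HasDerivWithinAt (V N j) (U N j t - U N (j - 1) t) (Set.Ici 0) t) ∧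
        (∀ j : ℤ, |U N j 0| ≤ 1 ∧ |V N j 0| ≤ 1)) ∧
      Tendsto (fun N : ℕ =>
          ⨆ j ∈ Finset.range (2 * N), |U N (j : ℤ) ((N : ℝ) * τ₀)|)
        atTop atTop := by
  classical
  -- For each `N`, use the largest `n ≤ N` for which a solution reaching the value `n` exists.
  let P : ℕ → ℕ → Prop := fun N n => ∃ u v : ℤ → ℝ → ℝ,
    IsUnitSolution N u v ∧ (n : ℝ) ≤ |u 0 (N * τ₀)|
  have hP0 : ∀ N, P N 0 := fun N => ⟨_, _, isUnitSolution_zero N, by simp⟩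
  have hspec : ∀ N, P N (Nat.findGreatest (P N) N) := fun N =>
    Nat.findGreatest_spec (Nat.zero_le N) (hP0 N)
  choose U V hsol hval using hspec
  refine ⟨U, V, fun N _ => hsol N, ?_⟩
  refine tendsto_atTop.2 fun C => ?_
  obtain ⟨n, hn⟩ := exists_nat_ge C
  obtain ⟨N₀, hN₀⟩ := exists_focusing τ₀ hτ₀ n
  filter_upwards [eventually_ge_atTop (N₀ + n + 1)] with N hN
  have h1 : n ≤ Nat.findGreatest (P N) N :=
    Nat.le_findGreatest (by omega) (hN₀ N (by omega))
  have h2 : (n : ℝ) ≤ (Nat.findGreatest (P N) N : ℕ) := by exact_mod_cast h1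
  have h3 := le_biSup_range (fun j => |U N (j : ℤ) ((N : ℝ) * τ₀)|) (fun _ => abs_nonneg _)
    (2 * N) 0 (by omega)
  exact (hn.trans h2).trans ((hval N).trans h3)
end

section
/- Dispersive decay for a single-bond perturbation in the linear periodic chain: for each N ≥ 1 let U^N_j, V^N_j : [0,∞) → ℝ, j ∈ ℤ/2Nℤ, satisfy (U^N_j)' = V^N_{j+1} − V^N_j and (V^N_j)' = U^N_j − U^N_{j−1}, with initial data U^N_j(0) = 1 if j = 0 and 0 otherwise, and V^N_j(0) = 0 for all j. Then for every τ > 0 there exists C > 0 (depending only on τ) such that max_j |U^N_j(N·τ)| ≤ C·N^{−1/7} for all N; in particular max_j |U^N_j(Nτ)| → 0 and max_j |V^N_j(Nτ)| → 0 as N → ∞. -/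
open Set Filter

/-!
The chain on `ℤ/2Nℤ` conserves `∑ U_j ^ 2 + V_j ^ 2`, so its solution is unique (`chain_eq_zero`)
and coincides with the explicit Fourier sums `bondSol` and `velSol`. At time `N τ` both are
averages over `j < 2N` of exponentials `exp (i f(j))` with
`f(j) = ± 2 N τ sin (j π / 2N) + j κ π / N`, where `κ = k` or `κ = k - 1/2`. It therefore suffices
to bound such exponential sums by `C N ^ (6/7)` (`exists_expSum_bound`).

The increments of the phase are `g(j) = A cos ((2j+1) π / 4N) + κ π / N` with `2τ ≤ |A| ≤ πτ`, and
`D(j) = exp (i g(j)) - 1` varies by `O(1/N)` in each step. Dividing by `D` and summing by parts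
would give cancellation, except where `D` is small. Replacing `1 / D` by its regularization
`conj D / (|D|² + ε)` gives, without any monotonicity assumption (`norm_sum_le_of_ratio`),

  `|∑ exp (i f(j))| ≤ ε ^ (-1/2) + (O(1/N) + ε) ∑ 1 / (|D(j)|² + ε)`,

which is used with `ε = 1/N`. Terms with `|D(j)| ≥ η` contribute `O(1/η²)` in total, and the other
ones at most a constant times their number. If `|D(j)| < η`, then `g(j)` is `O(η)`-close to some
`2πm`, with boundedly many possible `m`. As `cos x - cos y ≥ 2 ((y - x)/π)²` on `[0, π]`, for a
fixed `m` these `j` lie in an interval of length `O(N √η)` (`card_resonant_le`). The choice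
`η = N ^ (-2/7)` gives `O(N ^ (4/7) + N ^ (6/7))`.
-/

/-! ### Regularized summation by parts -/

/-- Lipschitz-type estimate for the regularized inverse `z ↦ conj z / (‖z‖² + ε)`. -/
lemma norm_regInv_sub_le (z w : ℂ) {ε : ℝ} (hε : 0 < ε) :
    ‖(starRingEnd ℂ) z / ((‖z‖ ^ 2 + ε : ℝ) : ℂ) - (starRingEnd ℂ) w / ((‖w‖ ^ 2 + ε : ℝ) : ℂ)‖
      ≤ ‖z - w‖ / 2 * (1 / (‖z‖ ^ 2 + ε) + 1 / (‖w‖ ^ 2 + ε)) := by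
  set A := ‖z‖ ^ 2 + ε with hA
  set B := ‖w‖ ^ 2 + ε with hB
  have hA0 : 0 < A := by positivity
  have hB0 : 0 < B := by positivity
  have hAc : (A : ℂ) ≠ 0 := by exact_mod_cast hA0.ne'
  have hBc : (B : ℂ) ≠ 0 := by exact_mod_cast hB0.ne'
  have hz : (A : ℂ) = z * (starRingEnd ℂ) z + ε := by
    rw [Complex.mul_conj', hA]; push_cast; ring
  have hw : (B : ℂ) = w * (starRingEnd ℂ) w + ε := by
    rw [Complex.mul_conj', hB]; push_cast; ring
  have key : (starRingEnd ℂ) z / (A : ℂ) - (starRingEnd ℂ) w / (B : ℂ)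
      = ((starRingEnd ℂ) z * (starRingEnd ℂ) w * (w - z) + ε * (starRingEnd ℂ) (z - w))
        / ((A * B : ℝ) : ℂ) := by
    push_cast
    rw [div_sub_div _ _ hAc hBc]
    congr 1
    rw [map_sub]
    linear_combination (starRingEnd ℂ) z * hw - (starRingEnd ℂ) w * hz
  rw [key, norm_div, Complex.norm_real, Real.norm_of_nonneg (by positivity)]
  have h1 : ‖(starRingEnd ℂ) z * (starRingEnd ℂ) w * (w - z) + ε * (starRingEnd ℂ) (z - w)‖
      ≤ ‖z - w‖ * ((A + B) / 2) := by
    refine (norm_add_le _ _).trans ?_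
    rw [norm_mul, norm_mul, norm_mul, RCLike.norm_conj, RCLike.norm_conj, RCLike.norm_conj,
      Complex.norm_real, Real.norm_of_nonneg hε.le, norm_sub_rev w z]
    have : ‖z‖ * ‖w‖ + ε ≤ (A + B) / 2 := by
      rw [hA, hB]; nlinarith [sq_nonneg (‖z‖ - ‖w‖)]
    nlinarith [norm_nonneg (z - w)]
  calc _ ≤ ‖z - w‖ * ((A + B) / 2) / (A * B) := by gcongr
    _ = _ := by field_simp; ring

lemma norm_regInv_le (z : ℂ) {ε : ℝ} (hε : 0 < ε) :
    ‖(starRingEnd ℂ) z / ((‖z‖ ^ 2 + ε : ℝ) : ℂ)‖ ≤ 1 / (2 * √ε) := by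
  have hA0 : 0 < ‖z‖ ^ 2 + ε := by positivity
  rw [norm_div, Complex.norm_real, Real.norm_of_nonneg hA0.le, RCLike.norm_conj,
    div_le_div_iff₀ hA0 (by positivity)]
  nlinarith [sq_nonneg (‖z‖ - √ε), Real.sq_sqrt hε.le]

/-- Summation by parts for a unimodular sequence `F` with `F (j + 1) = (1 + D j) * F j`, where
`1 / D j` is replaced by its regularized inverse. The defect `1 - ‖D‖² / (‖D‖² + ε)` of the
regularization is responsible for the `ε` in the factor `δ + ε`. -/
lemma norm_sum_le_of_ratio (F D : ℕ → ℂ) (n : ℕ) {ε δ : ℝ} (hε : 0 < ε) (hδ : 0 ≤ δ)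
    (hF : ∀ j, ‖F j‖ = 1) (hD : ∀ j, F (j + 1) - F j = D j * F j)
    (hDD : ∀ j, ‖D (j + 1) - D j‖ ≤ δ) :
    ‖∑ j ∈ Finset.range n, F j‖
      ≤ 1 / √ε + (δ + ε) * ∑ j ∈ Finset.range (n + 1), 1 / (‖D j‖ ^ 2 + ε) := by
  set c : ℕ → ℂ := fun j => (starRingEnd ℂ) (D j) / ((‖D j‖ ^ 2 + ε : ℝ) : ℂ) with hc
  set a : ℕ → ℝ := fun j => 1 / (‖D j‖ ^ 2 + ε) with ha
  have ha0 : ∀ j, 0 ≤ a j := fun j => by positivity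
  have hterm : ∀ j, F j = (c (j + 1) * F (j + 1) - c j * F j) - (c (j + 1) - c j) * F (j + 1)
      + (ε * a j : ℝ) * F j := by
    intro j
    have hA0 : 0 < ‖D j‖ ^ 2 + ε := by positivity
    have hAc : ((‖D j‖ ^ 2 + ε : ℝ) : ℂ) ≠ 0 := by exact_mod_cast hA0.ne'
    have h1 : c j * D j + (ε * a j : ℝ) = 1 := by
      simp only [hc, ha]
      push_cast at hAc ⊢
      field_simp
      rw [Complex.conj_mul']
    linear_combination (-F j) * h1 - c j * hD j
  have hsum : ∑ j ∈ Finset.range n, F j = (c n * F n - c 0 * F 0)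
      - ∑ j ∈ Finset.range n, (c (j + 1) - c j) * F (j + 1)
      + ∑ j ∈ Finset.range n, (ε * a j : ℝ) * F j := by
    rw [← Finset.sum_range_sub (fun j => c j * F j), ← Finset.sum_sub_distrib,
      ← Finset.sum_add_distrib]
    exact Finset.sum_congr rfl fun j _ => hterm j
  have hcn : ∀ j, ‖c j * F j‖ ≤ 1 / (2 * √ε) := fun j => by
    rw [norm_mul, hF, mul_one]; exact norm_regInv_le _ hε
  have h2 : ‖∑ j ∈ Finset.range n, (c (j + 1) - c j) * F (j + 1)‖
      ≤ δ * ∑ j ∈ Finset.range (n + 1), a j := by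
    calc _ ≤ ∑ j ∈ Finset.range n, δ / 2 * (a (j + 1) + a j) := by
          refine norm_sum_le_of_le _ fun j _ => ?_
          rw [norm_mul, hF, mul_one]
          refine (norm_regInv_sub_le _ _ hε).trans ?_
          have := hDD j
          have h3 := ha0 (j + 1)
          have h4 := ha0 j
          simp only [ha] at h3 h4 ⊢
          gcongr
      _ = δ / 2 * (∑ j ∈ Finset.range n, a (j + 1) + ∑ j ∈ Finset.range n, a j) := by
          rw [← Finset.mul_sum, Finset.sum_add_distrib]
      _ ≤ δ / 2 * (∑ j ∈ Finset.range (n + 1), a j + ∑ j ∈ Finset.range (n + 1), a j) := by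
          have h3 : ∑ j ∈ Finset.range n, a (j + 1) ≤ ∑ j ∈ Finset.range (n + 1), a j := by
            rw [Finset.sum_range_succ']; linarith [ha0 0]
          have h4 : ∑ j ∈ Finset.range n, a j ≤ ∑ j ∈ Finset.range (n + 1), a j := by
            rw [Finset.sum_range_succ]; linarith [ha0 n]
          gcongr
      _ = _ := by ring
  have h5 : ‖∑ j ∈ Finset.range n, (ε * a j : ℝ) * F j‖
      ≤ ε * ∑ j ∈ Finset.range (n + 1), a j := by
    calc _ ≤ ∑ j ∈ Finset.range n, ε * a j := by
          refine norm_sum_le_of_le _ fun j _ => ?_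
          rw [norm_mul, hF, mul_one, Complex.norm_real, Real.norm_of_nonneg]
          exact mul_nonneg hε.le (ha0 j)
      _ = ε * ∑ j ∈ Finset.range n, a j := by rw [Finset.mul_sum]
      _ ≤ _ := by
          rw [Finset.sum_range_succ]
          have := ha0 n
          gcongr
          linarith
  rw [hsum]
  have h6 : 1 / (2 * √ε) + 1 / (2 * √ε) = 1 / √ε := by
    field_simp; norm_num
  calc _ ≤ ‖c n * F n‖ + ‖c 0 * F 0‖ + δ * ∑ j ∈ Finset.range (n + 1), a j
        + ε * ∑ j ∈ Finset.range (n + 1), a j := by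
        refine (norm_add_le _ _).trans (add_le_add ((norm_sub_le _ _).trans
          (add_le_add (norm_sub_le _ _) h2)) h5)
    _ ≤ _ := by linarith [hcn n, hcn 0]

/-! ### Counting resonant indices -/

/-- The cosine decreases at least quadratically on `[0, π]`, uniformly up to the critical points. -/
lemma sq_le_cos_sub_cos {x y : ℝ} (hx : 0 ≤ x) (hxy : x ≤ y) (hy : y ≤ Real.pi) :
    2 * ((y - x) / Real.pi) ^ 2 ≤ Real.cos x - Real.cos y := by
  have hpi := Real.pi_pos
  have h1 : Real.cos x - Real.cos y = 2 * Real.sin ((x + y) / 2) * Real.sin ((y - x) / 2) := by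
    rw [Real.cos_sub_cos, show (x - y) / 2 = -((y - x) / 2) by ring, Real.sin_neg]; ring
  have h2 : (y - x) / Real.pi ≤ Real.sin ((y - x) / 2) := by
    have := Real.mul_le_sin (x := (y - x) / 2) (by linarith) (by linarith)
    calc _ = 2 / Real.pi * ((y - x) / 2) := by ring
      _ ≤ _ := this
  have h3 : Real.sin ((y - x) / 2) ≤ Real.sin ((x + y) / 2) := by
    have h4 : Real.sin ((x + y) / 2) - Real.sin ((y - x) / 2)
        = 2 * Real.sin (x / 2) * Real.cos (y / 2) := by
      rw [Real.sin_sub_sin]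
      ring_nf
    have h5 : 0 ≤ Real.sin (x / 2) := Real.sin_nonneg_of_nonneg_of_le_pi (by linarith) (by linarith)
    have h6 : 0 ≤ Real.cos (y / 2) := Real.cos_nonneg_of_mem_Icc ⟨by linarith, by linarith⟩
    nlinarith [mul_nonneg h5 h6]
  have h0 : 0 ≤ (y - x) / Real.pi := div_nonneg (by linarith) hpi.le
  rw [h1]
  nlinarith

/-- The integer is the one nearest to `g / 2π`; Jordan's inequality converts the chord length
`‖exp (i g) - 1‖` into the distance of `g` to `2πℤ`. -/
lemma exists_int_abs_sub_le (g : ℝ) :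
    ∃ m : ℤ, |g - 2 * Real.pi * m| ≤ Real.pi / 2 * ‖Complex.exp (Complex.I * g) - 1‖ ∧
      |g - 2 * Real.pi * m| ≤ Real.pi := by
  have hpi := Real.pi_pos
  refine ⟨round (g / (2 * Real.pi)), ?_⟩
  set m := round (g / (2 * Real.pi))
  have h1 : |g - 2 * Real.pi * m| ≤ Real.pi := by
    have := abs_sub_round (g / (2 * Real.pi))
    have h2 : g - 2 * Real.pi * m = 2 * Real.pi * (g / (2 * Real.pi) - m) := by field_simp
    rw [h2, abs_mul, abs_of_pos (by positivity)]
    nlinarith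
  refine ⟨?_, h1⟩
  rw [Complex.norm_exp_I_mul_ofReal_sub_one, norm_mul, Real.norm_eq_abs, Real.norm_eq_abs]
  have h3 : |Real.sin (g / 2)| = |Real.sin ((g - 2 * Real.pi * m) / 2)| := by
    rw [show (g - 2 * Real.pi * m) / 2 = g / 2 - m * Real.pi by ring, Real.sin_sub_int_mul_pi,
      abs_mul, abs_zpow]
    simp
  have h4 := Real.mul_abs_le_abs_sin (x := (g - 2 * Real.pi * m) / 2)
    (by rw [abs_div, abs_two]; linarith)
  rw [h3]
  rw [abs_div, abs_two] at h4
  rw [abs_two]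
  calc _ = Real.pi / 2 * (2 * (2 / Real.pi * (|g - 2 * Real.pi * m| / 2))) := by field_simp
    _ ≤ _ := by gcongr

lemma card_le_of_sub_le (s : Finset ℕ) {L : ℝ} (hL : 0 ≤ L)
    (h : ∀ a ∈ s, ∀ b ∈ s, a ≤ b → ((b : ℝ) - a) ≤ L) : (s.card : ℝ) ≤ L + 1 := by
  rcases s.eq_empty_or_nonempty with rfl | hs
  · simp; linarith
  · have h1 : s ⊆ Finset.Icc (s.min' hs) (s.max' hs) := fun a ha =>
      Finset.mem_Icc.2 ⟨s.min'_le a ha, s.le_max' a ha⟩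
    have h2 := Finset.card_le_card h1
    rw [Nat.card_Icc] at h2
    have h3 := h _ (s.min'_mem hs) _ (s.max'_mem hs) (s.min'_le_max' hs)
    have h4 := s.min'_le_max' hs
    have h5 : s.card + s.min' hs ≤ s.max' hs + 1 := by omega
    have h6 : (s.card : ℝ) + s.min' hs ≤ s.max' hs + 1 := by exact_mod_cast h5
    linarith

/-- Few indices are resonant: those whose phase increment is close to a fixed multiple `2πm` lie
in a window of length `N √(πη/τ)`, and only `|m| ≤ ⌈τ⌉ + 2` can occur. -/
lemma card_resonant_le {N : ℕ} (hN : 1 ≤ N) {τ A β η : ℝ} (hτ : 0 < τ) (hη : 0 < η)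
    (hA1 : 2 * τ ≤ |A|) (hA2 : |A| ≤ Real.pi * τ) (hβ : |β| ≤ 2 * Real.pi) :
    (((Finset.range (2 * N)).filter fun j : ℕ =>
      ‖Complex.exp (Complex.I * (A * Real.cos ((2 * j + 1) * Real.pi / (4 * N)) + β : ℝ)) - 1‖
        < η).card : ℝ)
      ≤ (2 * (⌈τ⌉₊ + 2) + 1) * (N * √(Real.pi * η / τ) + 1) := by
  have hpi := Real.pi_pos
  have hN0 : (0 : ℝ) < N := by exact_mod_cast hN
  set g : ℕ → ℝ := fun j => A * Real.cos ((2 * j + 1) * Real.pi / (4 * N)) + β with hg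
  set s := (Finset.range (2 * N)).filter fun j : ℕ =>
      ‖Complex.exp (Complex.I * (g j : ℝ)) - 1‖ < η with hs
  set K : ℤ := ((⌈τ⌉₊ + 2 : ℕ) : ℤ) with hK
  set t : ℤ → Finset ℕ := fun m => (Finset.range (2 * N)).filter fun j : ℕ =>
      |g j - 2 * Real.pi * m| ≤ Real.pi / 2 * η with ht
  have hsub : s ⊆ (Finset.Icc (-K) K).biUnion t := by
    intro j hj
    rw [hs, Finset.mem_filter] at hj
    obtain ⟨m, hm1, hm2⟩ := exists_int_abs_sub_le (g j)
    rw [Finset.mem_biUnion]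
    refine ⟨m, ?_, ?_⟩
    · have hgj : |g j| ≤ Real.pi * τ + 2 * Real.pi := by
        refine (abs_add_le _ _).trans (add_le_add ?_ hβ)
        rw [abs_mul]
        calc _ ≤ |A| * 1 := by gcongr; exact Real.abs_cos_le_one _
          _ ≤ _ := by linarith
      have h1 : |2 * Real.pi * (m : ℝ)| ≤ Real.pi * τ + 3 * Real.pi := by
        have := abs_sub_abs_le_abs_sub (2 * Real.pi * (m : ℝ)) (g j)
        rw [abs_sub_comm] at this
        linarith
      rw [abs_mul, abs_of_pos (by positivity)] at h1
      have h2 : 2 * |(m : ℝ)| ≤ τ + 3 := by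
        by_contra! h
        nlinarith
      have h3 : |(m : ℝ)| ≤ K := by
        rw [hK]; push_cast
        linarith [Nat.le_ceil τ]
      rw [Finset.mem_Icc]
      have h4 : |m| ≤ K := by exact_mod_cast h3
      exact abs_le.1 h4
    · rw [ht, Finset.mem_filter]
      exact ⟨hj.1, hm1.trans (by have := hj.2.le; gcongr)⟩
  have hcard : ∀ m, ((t m).card : ℝ) ≤ N * √(Real.pi * η / τ) + 1 := by
    intro m
    refine card_le_of_sub_le _ (by positivity) fun a ha b hb hab => ?_
    rw [ht, Finset.mem_filter, Finset.mem_range] at ha hb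
    have hab' : (a : ℝ) ≤ b := by exact_mod_cast hab
    have hb' : (b : ℝ) + 1 ≤ 2 * N := by exact_mod_cast hb.1
    have hcos := sq_le_cos_sub_cos (x := (2 * a + 1) * Real.pi / (4 * N))
      (y := (2 * b + 1) * Real.pi / (4 * N)) (by positivity) (by gcongr)
      (by rw [div_le_iff₀ (by positivity)]; nlinarith)
    set p := Real.cos ((2 * a + 1) * Real.pi / (4 * N))
    set q := Real.cos ((2 * b + 1) * Real.pi / (4 * N))
    have h1 : ((2 * b + 1) * Real.pi / (4 * N) - (2 * a + 1) * Real.pi / (4 * N)) / Real.pi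
        = ((b : ℝ) - a) / (2 * N) := by field_simp; ring
    rw [h1] at hcos
    have h2 : |A| * (p - q) ≤ Real.pi * η := by
      calc |A| * (p - q) ≤ |A| * |p - q| := by gcongr; exact le_abs_self _
        _ = |(g a - 2 * Real.pi * m) - (g b - 2 * Real.pi * m)| := by
            rw [← abs_mul]; congr 1; simp only [hg]; ring
        _ ≤ _ := (abs_sub _ _).trans (by linarith [ha.2, hb.2])
    have h3 : 2 * τ * (2 * (((b : ℝ) - a) / (2 * N)) ^ 2) ≤ Real.pi * η :=
      (mul_le_mul hA1 hcos (by positivity) (abs_nonneg _)).trans h2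
    have h4 : (((b : ℝ) - a) / N) ^ 2 ≤ Real.pi * η / τ := by
      rw [le_div_iff₀ hτ]
      calc _ = 2 * τ * (2 * (((b : ℝ) - a) / (2 * N)) ^ 2) := by field_simp
        _ ≤ _ := h3
    have h5 := Real.le_sqrt_of_sq_le h4
    rw [div_le_iff₀ hN0] at h5
    linarith
  calc (s.card : ℝ) ≤ ((Finset.Icc (-K) K).biUnion t).card := by
        exact_mod_cast Finset.card_le_card hsub
    _ ≤ ∑ m ∈ Finset.Icc (-K) K, ((t m).card : ℝ) := by exact_mod_cast Finset.card_biUnion_le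
    _ ≤ ∑ m ∈ Finset.Icc (-K) K, (N * √(Real.pi * η / τ) + 1) :=
        Finset.sum_le_sum fun m _ => hcard m
    _ = _ := by
        rw [Finset.sum_const, Int.card_Icc, nsmul_eq_mul]
        congr 1
        have : (K + 1 - -K).toNat = 2 * (⌈τ⌉₊ + 2) + 1 := by omega
        rw [this]; push_cast; ring

/-- The amplitude of the phase increment of `2 N σ sin (j π / 2N)` is comparable to `|σ|`,
uniformly in `N`. -/
lemma amplitude_bounds {N : ℕ} (hN : 1 ≤ N) (σ : ℝ) :
    2 * |σ| ≤ |4 * N * σ * Real.sin (Real.pi / (4 * N))| ∧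
      |4 * N * σ * Real.sin (Real.pi / (4 * N))| ≤ Real.pi * |σ| := by
  have hpi := Real.pi_pos
  have hN0 : (1 : ℝ) ≤ N := by exact_mod_cast hN
  have h0 : 0 < Real.pi / (4 * N) := by positivity
  have h1 := Real.mul_le_sin h0.le (by
    rw [div_le_div_iff₀ (by positivity) (by positivity)]; nlinarith)
  have h2 := Real.sin_le h0.le
  have h3 : (2 : ℝ) ≤ 4 * N * Real.sin (Real.pi / (4 * N)) := by
    calc (2 : ℝ) = 4 * N * (2 / Real.pi * (Real.pi / (4 * N))) := by field_simp
      _ ≤ _ := by gcongr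
  have h4 : 4 * N * Real.sin (Real.pi / (4 * N)) ≤ Real.pi := by
    calc _ ≤ 4 * N * (Real.pi / (4 * N)) := by gcongr
      _ = _ := by field_simp
  have h5 : |4 * N * σ * Real.sin (Real.pi / (4 * N))|
      = (4 * N * Real.sin (Real.pi / (4 * N))) * |σ| := by
    rw [show 4 * N * σ * Real.sin (Real.pi / (4 * N))
      = (4 * N * Real.sin (Real.pi / (4 * N))) * σ by ring, abs_mul, abs_of_pos (by linarith)]
  rw [h5]
  exact ⟨by gcongr, by gcongr⟩

/-! ### The exponential sum -/

/-- The constant depends on `τ = |σ|` only; the bound is uniform in the real frequency `κ`. -/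
lemma exists_expSum_bound {τ : ℝ} (hτ : 0 < τ) :
    ∃ C > 0, ∀ N : ℕ, 1 ≤ N → ∀ σ κ : ℝ, |σ| = τ → |κ| ≤ 2 * N →
      ‖∑ j ∈ Finset.range (2 * N), Complex.exp (Complex.I *
        (2 * N * σ * Real.sin (j * Real.pi / (2 * N)) + j * κ * Real.pi / N : ℝ))‖
        ≤ C * (N : ℝ) ^ (6 / 7 : ℝ) := by
  have hpi := Real.pi_pos
  set δ₀ : ℝ := Real.pi * τ * (Real.pi / 2) with hδ₀
  have hδ₀p : 0 < δ₀ := by positivity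
  set M : ℝ := 2 * (⌈τ⌉₊ + 2) + 1 with hM
  have hMp : 0 < M := by positivity
  refine ⟨1 + (δ₀ + 1) * (M * (√(Real.pi / τ) + 1) + 3), by positivity, ?_⟩
  intro N hN σ κ hσ hκ
  have hN1 : (1 : ℝ) ≤ N := by exact_mod_cast hN
  have hN0 : (0 : ℝ) < N := by linarith
  obtain ⟨hA1, hA2⟩ := amplitude_bounds hN σ
  rw [hσ] at hA1 hA2
  set A := 4 * N * σ * Real.sin (Real.pi / (4 * N)) with hA
  have hβ : |κ * Real.pi / N| ≤ 2 * Real.pi := by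
    rw [abs_div, abs_mul, abs_of_pos hpi, abs_of_pos hN0, div_le_iff₀ hN0]
    nlinarith
  set η : ℝ := (N : ℝ) ^ (-(2 / 7) : ℝ) with hη
  have hη0 : 0 < η := by positivity
  have hcard := card_resonant_le hN hτ hη0 hA1 hA2 hβ
  set g : ℕ → ℝ := fun j => A * Real.cos ((2 * j + 1) * Real.pi / (4 * N)) + κ * Real.pi / N
    with hg
  set f : ℕ → ℝ := fun j => 2 * N * σ * Real.sin (j * Real.pi / (2 * N)) + j * κ * Real.pi / N
    with hf
  have hfg : ∀ j, f (j + 1) = g j + f j := by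
    intro j
    have := Real.sin_sub_sin ((j + 1 : ℝ) * Real.pi / (2 * N)) (j * Real.pi / (2 * N))
    rw [show ((j + 1 : ℝ) * Real.pi / (2 * N) - j * Real.pi / (2 * N)) / 2 = Real.pi / (4 * N) by
      field_simp; ring, show ((j + 1 : ℝ) * Real.pi / (2 * N) + j * Real.pi / (2 * N)) / 2
        = (2 * j + 1) * Real.pi / (4 * N) by field_simp; ring] at this
    simp only [hf, hg, hA]
    push_cast
    rw [sub_eq_iff_eq_add.1 this]
    ring
  set D : ℕ → ℂ := fun j => Complex.exp (Complex.I * (g j : ℝ)) - 1 with hD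
  have hDD : ∀ j, ‖D (j + 1) - D j‖ ≤ δ₀ / N := by
    intro j
    have h1 : D (j + 1) - D j
        = Complex.exp (Complex.I * (g j : ℝ)) *
          (Complex.exp (Complex.I * ((g (j + 1) - g j : ℝ) : ℂ)) - 1) := by
      simp only [hD]
      rw [mul_sub, ← Complex.exp_add]
      push_cast
      ring_nf
    rw [h1, norm_mul, Complex.norm_exp_I_mul_ofReal, one_mul]
    refine (Real.norm_exp_I_mul_ofReal_sub_one_le).trans ?_
    have h2 : g (j + 1) - g j = A * (Real.cos ((2 * (j + 1) + 1) * Real.pi / (4 * N))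
        - Real.cos ((2 * j + 1) * Real.pi / (4 * N))) := by
      simp only [hg]; push_cast; ring
    rw [h2, Real.norm_eq_abs, abs_mul]
    have h3 : |Real.cos ((2 * (j + 1) + 1) * Real.pi / (4 * N))
        - Real.cos ((2 * j + 1) * Real.pi / (4 * N))| ≤ Real.pi / 2 / N := by
      refine (Real.abs_cos_sub_cos_le _ _).trans (le_of_eq ?_)
      rw [show (2 * (j + 1 : ℝ) + 1) * Real.pi / (4 * N) - (2 * j + 1) * Real.pi / (4 * N)
        = Real.pi / 2 / N by field_simp; ring, abs_of_pos (by positivity)]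
    calc _ ≤ Real.pi * τ * (Real.pi / 2 / N) := by gcongr
      _ = _ := by rw [hδ₀]; ring
  have hmain := norm_sum_le_of_ratio (fun j => Complex.exp (Complex.I * (f j : ℝ))) D (2 * N)
    (ε := 1 / N) (δ := δ₀ / N) (by positivity) (by positivity)
    (fun j => Complex.norm_exp_I_mul_ofReal _)
    (fun j => by
      simp only [hD]
      rw [hfg, sub_mul, ← Complex.exp_add]
      push_cast
      ring_nf)
    hDD
  refine hmain.trans ?_
  -- `√N`, `N √η` and `1 / η²` are all at most `N ^ (6 / 7)`
  set X : ℝ := (N : ℝ) ^ (6 / 7 : ℝ) with hX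
  have hX1 : 1 ≤ X := Real.one_le_rpow hN1 (by norm_num)
  have hsq : 1 / √(1 / (N : ℝ)) ≤ X := by
    rw [Real.sqrt_div zero_le_one, Real.sqrt_one, one_div_one_div, Real.sqrt_eq_rpow]
    exact Real.rpow_le_rpow_of_exponent_le hN1 (by norm_num)
  have hNη : (N : ℝ) * √η = X := by
    rw [hη, Real.sqrt_eq_rpow, ← Real.rpow_mul hN0.le, hX]
    nth_rewrite 1 [← Real.rpow_one (N : ℝ)]
    rw [← Real.rpow_add hN0]; norm_num
  have hη2 : 1 / η ^ 2 ≤ X := by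
    rw [hη, ← Real.rpow_natCast, ← Real.rpow_mul hN0.le, one_div, ← Real.rpow_neg hN0.le]
    exact Real.rpow_le_rpow_of_exponent_le hN1 (by norm_num)
  have hterm : ∀ j, 1 / (‖D j‖ ^ 2 + 1 / N) ≤ (N : ℝ) := by
    intro j
    rw [div_le_iff₀ (by positivity), mul_add, mul_one_div_cancel hN0.ne']
    have : 0 ≤ N * ‖D j‖ ^ 2 := by positivity
    linarith
  have hterm2 : ∀ j, 1 / (‖D j‖ ^ 2 + 1 / N) ≤ 1 / η ^ 2 + if ‖D j‖ < η then (N : ℝ) else 0 := by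
    intro j
    split_ifs with h
    · have : 0 ≤ 1 / η ^ 2 := by positivity
      linarith [hterm j]
    · rw [add_zero]
      have h' := not_lt.1 h
      have h1 : η ^ 2 ≤ ‖D j‖ ^ 2 := by gcongr
      have h2 : 0 ≤ 1 / (N : ℝ) := by positivity
      apply one_div_le_one_div_of_le (by positivity)
      linarith
  have hB : (((Finset.range (2 * N)).filter fun j : ℕ => ‖D j‖ < η).card : ℝ)
      ≤ M * (√(Real.pi / τ) + 1) * X := by
    refine hcard.trans ?_
    rw [show Real.pi * η / τ = (Real.pi / τ) * η by ring, Real.sqrt_mul (by positivity)]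
    calc _ = M * (√(Real.pi / τ) * (N * √η) + 1) := by ring
      _ ≤ M * (√(Real.pi / τ) * X + X) := by rw [hNη]; gcongr
      _ = _ := by ring
  have hS : ∑ j ∈ Finset.range (2 * N + 1), 1 / (‖D j‖ ^ 2 + 1 / (N : ℝ))
      ≤ N * (M * (√(Real.pi / τ) + 1) + 3) * X := by
    -- the angle of the last index `2 * N` exceeds `π`, so the count does not cover it
    rw [Finset.sum_range_succ]
    have h1 : ∑ j ∈ Finset.range (2 * N), 1 / (‖D j‖ ^ 2 + 1 / (N : ℝ))
        ≤ 2 * N * (1 / η ^ 2) + N * (M * (√(Real.pi / τ) + 1) * X) := by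
      refine (Finset.sum_le_sum fun j _ => hterm2 j).trans ?_
      rw [Finset.sum_add_distrib, Finset.sum_const, Finset.card_range, ← Finset.sum_filter,
        Finset.sum_const, nsmul_eq_mul, nsmul_eq_mul]
      push_cast
      rw [mul_comm ((Finset.card _ : ℕ) : ℝ) (N : ℝ)]
      gcongr
    have h2 := hterm (2 * N)
    have h3 : 2 * N * (1 / η ^ 2) ≤ 2 * N * X := by gcongr
    nlinarith
  have hfin : (δ₀ / N + 1 / N) * ∑ j ∈ Finset.range (2 * N + 1), 1 / (‖D j‖ ^ 2 + 1 / (N : ℝ))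
      ≤ (δ₀ + 1) * (M * (√(Real.pi / τ) + 1) + 3) * X := by
    calc _ ≤ (δ₀ / N + 1 / N) * (N * (M * (√(Real.pi / τ) + 1) + 3) * X) := by gcongr
      _ = _ := by field_simp
  linarith

/-! ### The explicit solution -/

/-- The `k`-th bond variable of the explicit solution on `ℤ/2Nℤ`, written as a real Fourier sum. -/
noncomputable def bondSol (N : ℕ) (k : ℤ) (t : ℝ) : ℝ :=
  1 / (2 * N) * ∑ j ∈ Finset.range (2 * N),
    Real.cos (2 * t * Real.sin (j * Real.pi / (2 * N))) * Real.cos (j * k * Real.pi / N)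

/-- The `k`-th velocity variable of the explicit solution; compared with `bondSol` the spatial
frequency sees the half-integer site `k - 1/2`. -/
noncomputable def velSol (N : ℕ) (k : ℤ) (t : ℝ) : ℝ :=
  -(1 / (2 * N) * ∑ j ∈ Finset.range (2 * N),
    Real.sin (2 * t * Real.sin (j * Real.pi / (2 * N))) *
      Real.sin (j * (k - 1 / 2) * Real.pi / N))

lemma bondSol_periodic {N : ℕ} (hN : 1 ≤ N) (k : ℤ) (t : ℝ) :
    bondSol N (k + 2 * N) t = bondSol N k t := by
  have hN0 : (N : ℝ) ≠ 0 := by positivity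
  unfold bondSol
  congr 1
  refine Finset.sum_congr rfl fun j _ => ?_
  rw [show (j * ((k + 2 * N : ℤ) : ℝ) * Real.pi / N) = j * k * Real.pi / N + j * (2 * Real.pi) by
    push_cast; field_simp, Real.cos_add_nat_mul_two_pi]

lemma velSol_periodic {N : ℕ} (hN : 1 ≤ N) (k : ℤ) (t : ℝ) :
    velSol N (k + 2 * N) t = velSol N k t := by
  have hN0 : (N : ℝ) ≠ 0 := by positivity
  unfold velSol
  congr 2
  refine Finset.sum_congr rfl fun j _ => ?_
  rw [show (j * (((k + 2 * N : ℤ) : ℝ) - 1 / 2) * Real.pi / N)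
    = j * (k - 1 / 2) * Real.pi / N + j * (2 * Real.pi) by
    push_cast; field_simp; ring, Real.sin_add_nat_mul_two_pi]

lemma hasDerivAt_bondSol (N : ℕ) (k : ℤ) (t : ℝ) :
    HasDerivAt (bondSol N k) (velSol N (k + 1) t - velSol N k t) t := by
  have h : HasDerivAt (bondSol N k) (1 / (2 * N) * ∑ j ∈ Finset.range (2 * N),
      (-Real.sin (2 * t * Real.sin (j * Real.pi / (2 * N))) *
        (2 * 1 * Real.sin (j * Real.pi / (2 * N)))) * Real.cos (j * k * Real.pi / N)) t := by
    unfold bondSol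
    refine HasDerivAt.const_mul _ (HasDerivAt.fun_sum fun j _ => ?_)
    exact ((((hasDerivAt_id' t).const_mul 2).mul_const _).cos).mul_const _
  convert h using 1
  unfold velSol
  rw [neg_sub_neg, ← mul_sub, ← Finset.sum_sub_distrib]
  congr 1
  refine Finset.sum_congr rfl fun j _ => ?_
  rw [← mul_sub, Real.sin_sub_sin]
  rw [show (j * ((k : ℝ) - 1 / 2) * Real.pi / N
      - j * (((k + 1 : ℤ) : ℝ) - 1 / 2) * Real.pi / N) / 2 = -(j * Real.pi / (2 * N)) by
      push_cast; ring,
    show (j * ((k : ℝ) - 1 / 2) * Real.pi / N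
      + j * (((k + 1 : ℤ) : ℝ) - 1 / 2) * Real.pi / N) / 2 = j * k * Real.pi / N by
      push_cast; ring, Real.sin_neg]
  ring

lemma hasDerivAt_velSol (N : ℕ) (k : ℤ) (t : ℝ) :
    HasDerivAt (velSol N k) (bondSol N k t - bondSol N (k - 1) t) t := by
  have h : HasDerivAt (velSol N k) (-(1 / (2 * N) * ∑ j ∈ Finset.range (2 * N),
      (Real.cos (2 * t * Real.sin (j * Real.pi / (2 * N))) *
        (2 * 1 * Real.sin (j * Real.pi / (2 * N)))) *
          Real.sin (j * (k - 1 / 2) * Real.pi / N))) t := by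
    unfold velSol
    refine (HasDerivAt.const_mul _ (HasDerivAt.fun_sum fun j _ => ?_)).fun_neg
    exact ((((hasDerivAt_id' t).const_mul 2).mul_const _).sin).mul_const _
  convert h using 1
  unfold bondSol
  rw [← mul_sub, ← Finset.sum_sub_distrib, ← mul_neg, ← Finset.sum_neg_distrib]
  congr 1
  refine Finset.sum_congr rfl fun j _ => ?_
  rw [← mul_sub, Real.cos_sub_cos]
  rw [show (j * (k : ℝ) * Real.pi / N - j * ((k - 1 : ℤ) : ℝ) * Real.pi / N) / 2
      = j * Real.pi / (2 * N) by push_cast; ring,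
    show (j * (k : ℝ) * Real.pi / N + j * ((k - 1 : ℤ) : ℝ) * Real.pi / N) / 2
      = j * (k - 1 / 2) * Real.pi / N by push_cast; ring]
  ring

lemma velSol_zero (N : ℕ) (k : ℤ) : velSol N k 0 = 0 := by
  simp [velSol]

/-- At time zero `bondSol` is the discrete delta: orthogonality of characters of `ℤ/2Nℤ`. -/
lemma bondSol_zero {N : ℕ} (hN : 1 ≤ N) (k : ℤ) :
    bondSol N k 0 = if k % (2 * (N : ℤ)) = 0 then 1 else 0 := by
  have hpi := Real.pi_pos
  have hN0 : (N : ℝ) ≠ 0 := by positivity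
  have hN0c : (N : ℂ) ≠ 0 := by exact_mod_cast hN0
  have hform : bondSol N k 0 = 1 / (2 * N) *
      ∑ j ∈ Finset.range (2 * N), Real.cos (j * k * Real.pi / N) := by
    simp [bondSol]
  rw [hform]
  split_ifs with h
  · obtain ⟨m, rfl⟩ := Int.dvd_of_emod_eq_zero h
    have : ∀ j ∈ Finset.range (2 * N),
        Real.cos (j * ((2 * (N : ℤ) * m : ℤ) : ℝ) * Real.pi / N) = 1 := by
      intro j _
      rw [show (j * ((2 * (N : ℤ) * m : ℤ) : ℝ) * Real.pi / N) = ((j * m : ℤ) : ℝ) * (2 * Real.pi) by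
        push_cast; field_simp]
      exact Real.cos_int_mul_two_pi _
    rw [Finset.sum_congr rfl this]
    simp
    field_simp
  · set z : ℂ := Complex.exp (k * Real.pi / N * Complex.I) with hz
    have hz1 : z ≠ 1 := by
      intro h1
      obtain ⟨n, hn⟩ := Complex.exp_eq_one_iff.1 h1
      apply h
      have h2 : (k : ℂ) = (2 * N * n : ℤ) := by
        have hpc : (Real.pi : ℂ) ≠ 0 := by exact_mod_cast hpi.ne'
        have hI := Complex.I_ne_zero
        field_simp at hn
        push_cast
        linear_combination hn
      have h3 : k = 2 * N * n := by exact_mod_cast h2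
      rw [h3]
      exact Int.mul_emod_right _ _
    have hzn : z ^ (2 * N) = 1 := by
      rw [hz, ← Complex.exp_nat_mul]
      rw [show ((2 * N : ℕ) : ℂ) * (k * Real.pi / N * Complex.I) = k * (2 * Real.pi * Complex.I) by
        push_cast; field_simp]
      exact Complex.exp_int_mul_two_pi_mul_I k
    have hsum : ∑ j ∈ Finset.range (2 * N), z ^ j = 0 := by
      have := geom_sum_mul z (2 * N)
      rw [hzn, sub_self] at this
      exact (mul_eq_zero.1 this).resolve_right (sub_ne_zero.2 hz1)
    have hre : ∑ j ∈ Finset.range (2 * N), Real.cos (j * k * Real.pi / N) = 0 := by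
      have h4 := congrArg Complex.re hsum
      rw [Complex.re_sum, Complex.zero_re] at h4
      rw [← h4]
      refine Finset.sum_congr rfl fun j _ => ?_
      rw [hz, ← Complex.exp_nat_mul, show (j : ℂ) * (k * Real.pi / N * Complex.I)
        = ((j * k * Real.pi / N : ℝ) : ℂ) * Complex.I by push_cast; ring,
        Complex.exp_ofReal_mul_I_re]
    rw [hre, mul_zero]

/-! ### Uniqueness and decay -/

/-- Conservation of the energy `∑ u_j ^ 2 + v_j ^ 2`: a solution of the chain with zero initial
data vanishes. -/
lemma chain_eq_zero (N : ℕ) (u v : ℤ → ℝ → ℝ)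
    (hu : ∀ j t, u (j + 2 * N) t = u j t) (hv : ∀ j t, v (j + 2 * N) t = v j t)
    (hu' : ∀ j, ∀ t ∈ Ici (0 : ℝ), HasDerivWithinAt (u j) (v (j + 1) t - v j t) (Ici 0) t)
    (hv' : ∀ j, ∀ t ∈ Ici (0 : ℝ), HasDerivWithinAt (v j) (u j t - u (j - 1) t) (Ici 0) t)
    (hu0 : ∀ j, u j 0 = 0) (hv0 : ∀ j, v j 0 = 0) {t : ℝ} (ht : 0 ≤ t) {k : ℕ}
    (hk : k < 2 * N) : u k t = 0 ∧ v k t = 0 := by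
  set E : ℝ → ℝ := fun s => ∑ j ∈ Finset.range (2 * N), (u j s ^ 2 + v j s ^ 2) with hE
  have hE' : ∀ s ∈ Ici (0 : ℝ), HasDerivWithinAt E 0 (Ici 0) s := by
    intro s hs
    have h : HasDerivWithinAt E (∑ j ∈ Finset.range (2 * N),
        ((2 : ℕ) * u j s ^ (2 - 1) * (v (j + 1) s - v j s)
          + (2 : ℕ) * v j s ^ (2 - 1) * (u j s - u (j - 1) s))) (Ici 0) s :=
      HasDerivWithinAt.fun_sum fun j _ =>
        (((hu' j s hs).fun_pow 2).fun_add ((hv' j s hs).fun_pow 2))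
    convert h using 1
    -- the summand is the increment of `2 * v_j * u_{j-1}`, so the sum over a period telescopes
    have h1 := Finset.sum_range_sub (fun j : ℕ => 2 * v j s * u (j - 1) s) (2 * N)
    have h2 : v ((2 * N : ℕ) : ℤ) s = v ((0 : ℕ) : ℤ) s := by
      have := hv 0 s; push_cast; rwa [zero_add] at this
    have h3 : u ((2 * N : ℕ) - 1 : ℤ) s = u ((0 : ℕ) - 1 : ℤ) s := by
      rw [← hu (((0 : ℕ) : ℤ) - 1) s]; congr 1
    rw [h2, h3, sub_self] at h1
    rw [← h1]
    refine Finset.sum_congr rfl fun j _ => ?_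
    push_cast
    rw [add_sub_cancel_right]
    ring
  have hconst := constant_of_has_deriv_right_zero (f := E) (a := 0) (b := t)
    (fun s hs => ((hE' s hs.1).continuousWithinAt).mono Icc_subset_Ici_self)
    (fun s hs => (hE' s hs.1).mono (Ici_subset_Ici.2 hs.1)) t ⟨ht, le_rfl⟩
  have hE0 : E 0 = 0 := by simp [hE, hu0, hv0]
  rw [hE0, hE] at hconst
  have h4 := (Finset.sum_eq_zero_iff_of_nonneg (fun j _ => by positivity)).1 hconst k
    (Finset.mem_range.2 hk)
  constructor <;> nlinarith [sq_nonneg (u k t), sq_nonneg (v k t)]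

/-- The product formulas turn both solutions into half the sum or difference of the exponential
sums with `σ = τ` and `σ = -τ`. -/
lemma bondSol_velSol_bound {τ : ℝ} (hτ : 0 < τ) :
    ∃ C > 0, ∀ N : ℕ, 1 ≤ N → ∀ k : ℕ, k < 2 * N →
      |bondSol N k (N * τ)| ≤ C * (N : ℝ) ^ (-(1 / 7) : ℝ) ∧
      |velSol N k (N * τ)| ≤ C * (N : ℝ) ^ (-(1 / 7) : ℝ) := by
  obtain ⟨C, hC, hbound⟩ := exists_expSum_bound hτ
  refine ⟨C / 2, by positivity, fun N hN k hk => ?_⟩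
  have hN0 : (0 : ℝ) < N := by exact_mod_cast hN
  have hk' : (k : ℝ) ≤ 2 * N := by exact_mod_cast hk.le
  have hk0 : (0 : ℝ) ≤ k := by positivity
  have hN1 : (1 : ℝ) ≤ N := by exact_mod_cast hN
  -- real form of the exponential sum bound
  have hcos : ∀ σ κ : ℝ, |σ| = τ → |κ| ≤ 2 * N →
      |∑ j ∈ Finset.range (2 * N), Real.cos
        (2 * N * σ * Real.sin (j * Real.pi / (2 * N)) + j * κ * Real.pi / N)|
        ≤ C * (N : ℝ) ^ (6 / 7 : ℝ) := by
    intro σ κ hσ hκ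
    refine le_trans ?_ (hbound N hN σ κ hσ hκ)
    refine le_trans (le_of_eq ?_) (Complex.abs_re_le_norm _)
    rw [Complex.re_sum]
    congr 1
    refine Finset.sum_congr rfl fun j _ => ?_
    rw [mul_comm Complex.I, Complex.exp_ofReal_mul_I_re]
  have hpow : 1 / (2 * (N : ℝ)) * (C * (N : ℝ) ^ (6 / 7 : ℝ))
      = C / 2 * (N : ℝ) ^ (-(1 / 7) : ℝ) := by
    rw [show (-(1 / 7) : ℝ) = 6 / 7 - 1 by norm_num, Real.rpow_sub_one hN0.ne']
    field_simp
  have hhalf : ∀ x y B : ℝ, |x| ≤ B → |y| ≤ B → |(x + y) / 2| ≤ B ∧ |(x - y) / 2| ≤ B := by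
    intro x y B hx hy
    rw [abs_le] at *
    rw [abs_le]
    constructor <;> constructor <;> linarith
  have hτ1 : |τ| = τ := abs_of_pos hτ
  have hτ2 : |-τ| = τ := by rw [abs_neg, hτ1]
  rw [← hpow]
  constructor
  · have hκ : |(k : ℝ)| ≤ 2 * N := by rwa [abs_of_nonneg hk0]
    have h := (hhalf _ _ _ (hcos τ k hτ1 hκ) (hcos (-τ) k hτ2 hκ)).1
    unfold bondSol
    rw [abs_mul, abs_of_pos (by positivity)]
    refine mul_le_mul_of_nonneg_left (le_trans (le_of_eq ?_) h) (by positivity)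
    congr 1
    rw [← Finset.sum_add_distrib, Finset.sum_div]
    refine Finset.sum_congr rfl fun j _ => ?_
    rw [show 2 * N * -τ * Real.sin (j * Real.pi / (2 * N))
        = -(2 * (N * τ) * Real.sin (j * Real.pi / (2 * N))) by ring,
      show 2 * N * τ * Real.sin (j * Real.pi / (2 * N))
        = 2 * (N * τ) * Real.sin (j * Real.pi / (2 * N)) by ring,
      Real.cos_add, Real.cos_add, Real.cos_neg, Real.sin_neg]
    push_cast
    ring
  · have hκ : |(k : ℝ) - 1 / 2| ≤ 2 * N := by
      rw [abs_le]; constructor <;> linarith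
    have h := (hhalf _ _ _ (hcos τ _ hτ1 hκ) (hcos (-τ) _ hτ2 hκ)).2
    unfold velSol
    rw [abs_neg, abs_mul, abs_of_pos (by positivity), ← abs_neg (∑ j ∈ _, _)]
    refine mul_le_mul_of_nonneg_left (le_trans (le_of_eq ?_) h) (by positivity)
    congr 1
    rw [← Finset.sum_sub_distrib, Finset.sum_div, ← Finset.sum_neg_distrib]
    refine Finset.sum_congr rfl fun j _ => ?_
    rw [show 2 * N * -τ * Real.sin (j * Real.pi / (2 * N))
        = -(2 * (N * τ) * Real.sin (j * Real.pi / (2 * N))) by ring,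
      show 2 * N * τ * Real.sin (j * Real.pi / (2 * N))
        = 2 * (N * τ) * Real.sin (j * Real.pi / (2 * N)) by ring,
      Real.cos_add, Real.cos_add, Real.cos_neg, Real.sin_neg]
    push_cast
    ring

/-- **Dispersive decay for a single-bond perturbation in the linear periodic chain.**
For the linear periodic chain `(U_j)' = V_{j+1} − V_j`, `(V_j)' = U_j − U_{j−1}` on
`ℤ/2Nℤ` with initial data `U_j(0) = δ_j^0`, `V_j(0) = 0`, for every `τ > 0` there is
`C > 0` with `max_j |U^N_j(Nτ)| ≤ C N^{−1/7}` for all `N ≥ 1`; in particular both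
`max_j |U^N_j(Nτ)|` and `max_j |V^N_j(Nτ)|` tend to `0` as `N → ∞`. -/
theorem dispersive_decay_single_bond
    (U V : ℕ → ℤ → ℝ → ℝ)
    (hper : ∀ N : ℕ, 1 ≤ N → ∀ (j : ℤ) (t : ℝ),
      U N (j + 2 * (N : ℤ)) t = U N j t ∧ V N (j + 2 * (N : ℤ)) t = V N j t)
    (hode : ∀ N : ℕ, 1 ≤ N → ∀ (j : ℤ), ∀ t ∈ Set.Ici (0 : ℝ),
      HasDerivWithinAt (U N j) (V N (j + 1) t - V N j t) (Set.Ici 0) t ∧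
      HasDerivWithinAt (V N j) (U N j t - U N (j - 1) t) (Set.Ici 0) t)
    (hU0 : ∀ N : ℕ, 1 ≤ N → ∀ j : ℤ,
      U N j 0 = if j % (2 * (N : ℤ)) = 0 then 1 else 0)
    (hV0 : ∀ N : ℕ, 1 ≤ N → ∀ j : ℤ, V N j 0 = 0)
    (τ : ℝ) (hτ : 0 < τ) :
    (∃ C > 0, ∀ N : ℕ, 1 ≤ N →
        (⨆ j ∈ Finset.range (2 * N), |U N (j : ℤ) ((N : ℝ) * τ)|)
          ≤ C * (N : ℝ) ^ (-(1 / 7) : ℝ)) ∧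
    Tendsto (fun N : ℕ =>
        ⨆ j ∈ Finset.range (2 * N), |U N (j : ℤ) ((N : ℝ) * τ)|) atTop (nhds 0) ∧
    Tendsto (fun N : ℕ =>
        ⨆ j ∈ Finset.range (2 * N), |V N (j : ℤ) ((N : ℝ) * τ)|) atTop (nhds 0) := by
  obtain ⟨C, hC, hbound⟩ := bondSol_velSol_bound hτ
  have hsol : ∀ N : ℕ, 1 ≤ N → ∀ k : ℕ, k < 2 * N →
      U N k (N * τ) = bondSol N k (N * τ) ∧ V N k (N * τ) = velSol N k (N * τ) := by
    intro N hN k hk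
    have h := chain_eq_zero N (fun j t => U N j t - bondSol N j t)
      (fun j t => V N j t - velSol N j t)
      (fun j t => by rw [(hper N hN j t).1, bondSol_periodic hN])
      (fun j t => by rw [(hper N hN j t).2, velSol_periodic hN])
      (fun j t ht => by
        have := (hode N hN j t ht).1.fun_sub (hasDerivAt_bondSol N j t).hasDerivWithinAt
        exact this.congr_deriv (by ring))
      (fun j t ht => by
        have := (hode N hN j t ht).2.fun_sub (hasDerivAt_velSol N j t).hasDerivWithinAt
        exact this.congr_deriv (by ring))
      (fun j => by rw [hU0 N hN, bondSol_zero hN, sub_self])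
      (fun j => by rw [hV0 N hN, velSol_zero, sub_self])
      (t := N * τ) (by positivity) hk
    exact ⟨sub_eq_zero.1 h.1, sub_eq_zero.1 h.2⟩
  have hsup : ∀ (W : ℕ → ℤ → ℝ → ℝ) (N : ℕ),
      (∀ k : ℕ, k < 2 * N → |W N k (N * τ)| ≤ C * (N : ℝ) ^ (-(1 / 7) : ℝ)) →
      (⨆ j ∈ Finset.range (2 * N), |W N (j : ℤ) ((N : ℝ) * τ)|)
        ≤ C * (N : ℝ) ^ (-(1 / 7) : ℝ) := by
    intro W N h
    have h0 : 0 ≤ C * (N : ℝ) ^ (-(1 / 7) : ℝ) := by positivity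
    exact Real.iSup_le (fun j => Real.iSup_le (fun hj => h j (Finset.mem_range.1 hj)) h0) h0
  have hU : ∀ N : ℕ, 1 ≤ N → (⨆ j ∈ Finset.range (2 * N), |U N (j : ℤ) ((N : ℝ) * τ)|)
      ≤ C * (N : ℝ) ^ (-(1 / 7) : ℝ) := fun N hN => hsup U N fun k hk => by
    rw [(hsol N hN k hk).1]; exact (hbound N hN k hk).1
  have hV : ∀ N : ℕ, 1 ≤ N → (⨆ j ∈ Finset.range (2 * N), |V N (j : ℤ) ((N : ℝ) * τ)|)
      ≤ C * (N : ℝ) ^ (-(1 / 7) : ℝ) := fun N hN => hsup V N fun k hk => by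
    rw [(hsol N hN k hk).2]; exact (hbound N hN k hk).2
  have hlim : Tendsto (fun N : ℕ => C * (N : ℝ) ^ (-(1 / 7) : ℝ)) atTop (nhds 0) := by
    have := ((tendsto_rpow_neg_atTop (y := 1 / 7) (by norm_num)).comp
      tendsto_natCast_atTop_atTop).const_mul C
    simpa using this
  have hnonneg : ∀ (W : ℕ → ℤ → ℝ → ℝ) (N : ℕ),
      0 ≤ ⨆ j ∈ Finset.range (2 * N), |W N (j : ℤ) ((N : ℝ) * τ)| := fun W N =>
    Real.iSup_nonneg fun j => Real.iSup_nonneg fun _ => abs_nonneg _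
  exact ⟨⟨C, hC, hU⟩,
    tendsto_of_tendsto_of_tendsto_of_le_of_le' tendsto_const_nhds hlim
      (Eventually.of_forall (hnonneg U)) ((eventually_ge_atTop 1).mono hU),
    tendsto_of_tendsto_of_tendsto_of_le_of_le' tendsto_const_nhds hlim
      (Eventually.of_forall (hnonneg V)) ((eventually_ge_atTop 1).mono hV)⟩
end

section
/- Rankine–Hugoniot relation for discrete shock waves: let W ∈ C¹(ℝ) and suppose X_j(t) = φ(j − ct), j ∈ ℤ, t ≥ 0, is a discrete shock wave of the Newton chain on ℤ associated with (u_l, u_r), u_l ≠ u_r: φ ∈ C²(ℝ), c ∈ ℝ, c²φ''(x) = W'(φ(x+1) − φ(x)) − W'(φ(x) − φ(x−1)) for all x ∈ ℝ, φ'(x) → u_l as x → −∞ and φ'(x) → u_r as x → +∞. Then c²·(u_r − u_l) = W'(u_r) − W'(u_l). -/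
/-!
Put `g x = W'(φ (x + 1) - φ x)` and let `P` be a primitive of `g`. The travelling-wave equation says
precisely that `x ↦ c² φ' (x + 1) - (P (x + 1) - P x)` has zero derivative, hence is constant.
If the derivative of a function tends to `L` at `±∞`, so do its unit increments, by the mean value
theorem (`tendsto_unit_increment`). Applied to `φ`, and then to `P`, this shows that
`P (x + 1) - P x` tends to `W'(u_l)` at `-∞` and to `W'(u_r)` at `+∞`; equating the limits of the
constant function at both ends gives the claim.
-/

open Filter

/-- The unit increments of a function inherit the limit of its derivative. Condition `hl`,
which lets the mean-value points follow `l`, holds for both `atTop` and `atBot`. -/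
lemma tendsto_unit_increment {l : Filter ℝ}
    (hl : ∀ ξ : ℝ → ℝ, (∀ x, ξ x ∈ Set.Ioo x (x + 1)) → Tendsto ξ l l)
    {F F' : ℝ → ℝ} (hF : ∀ x, HasDerivAt F (F' x) x) {L : ℝ} (hL : Tendsto F' l (nhds L)) :
    Tendsto (fun x => F (x + 1) - F x) l (nhds L) := by
  have mean : ∀ x : ℝ, ∃ y ∈ Set.Ioo x (x + 1), F' y = F (x + 1) - F x := by
    intro x
    obtain ⟨y, hy, h⟩ := exists_hasDerivAt_eq_slope F F' (lt_add_one x)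
      (fun z _ => (hF z).continuousAt.continuousWithinAt) (fun z _ => hF z)
    exact ⟨y, hy, by simpa using h⟩
  choose ξ hξ hval using mean
  exact (hL.comp (hl ξ hξ)).congr hval

lemma tendsto_mean_point_atTop (ξ : ℝ → ℝ) (h : ∀ x, ξ x ∈ Set.Ioo x (x + 1)) :
    Tendsto ξ atTop atTop :=
  tendsto_atTop_mono (fun x => (h x).1.le) tendsto_id

lemma tendsto_mean_point_atBot (ξ : ℝ → ℝ) (h : ∀ x, ξ x ∈ Set.Ioo x (x + 1)) :
    Tendsto ξ atBot atBot :=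
  tendsto_atBot_mono (fun x => (h x).2.le) (tendsto_atBot_add_const_right _ 1 tendsto_id)

/-- **Rankine–Hugoniot relation for discrete shock waves.**
If `X_j(t) = φ(j − ct)` is a discrete shock wave of the Newton chain on `ℤ`
associated with `(u_l, u_r)`, `u_l ≠ u_r`, then `c²(u_r − u_l) = W'(u_r) − W'(u_l)`. -/
theorem rankine_hugoniot_discrete_shock
    (W : ℝ → ℝ) (hW : ContDiff ℝ 1 W)
    (ul ur c : ℝ) (hne : ul ≠ ur)
    (φ : ℝ → ℝ) (hφ : ContDiff ℝ 2 φ)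
    (heq : ∀ x : ℝ, c ^ 2 * deriv (deriv φ) x
      = deriv W (φ (x + 1) - φ x) - deriv W (φ x - φ (x - 1)))
    (hl : Tendsto (deriv φ) atBot (nhds ul))
    (hr : Tendsto (deriv φ) atTop (nhds ur)) :
    c ^ 2 * (ur - ul) = deriv W ur - deriv W ul := by
  have hW' : Continuous (deriv W) := hW.continuous_deriv le_rfl
  have hφ1 : ∀ x, HasDerivAt φ (deriv φ x) x := fun x =>
    (hφ.differentiable (by norm_num) x).hasDerivAt
  have hφ2 : ∀ x, HasDerivAt (deriv φ) (deriv (deriv φ) x) x := fun x =>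
    ((contDiff_succ_iff_deriv.1 (show ContDiff ℝ (1 + 1) φ by
      simpa [one_add_one_eq_two] using hφ)).2.2.differentiable (by norm_num) x).hasDerivAt
  set g : ℝ → ℝ := fun x => deriv W (φ (x + 1) - φ x) with hg
  have hgc : Continuous g := by
    have := hφ.continuous
    fun_prop
  set P : ℝ → ℝ := fun x => ∫ t in (0 : ℝ)..x, g t
  have hP : ∀ x, HasDerivAt P (g x) x := fun x => hgc.integral_hasStrictDerivAt 0 x |>.hasDerivAt
  set H : ℝ → ℝ := fun x => c ^ 2 * deriv φ (x + 1) - (P (x + 1) - P x) with hH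
  have hH' : ∀ x, HasDerivAt H 0 x := by
    intro x
    have h := (((hφ2 (x + 1)).comp_add_const x 1).const_mul (c ^ 2)).sub
      (((hP (x + 1)).comp_add_const x 1).sub (hP x))
    refine h.congr_deriv ?_
    have := heq (x + 1)
    simp only [add_sub_cancel_right] at this
    simp only [hg]
    linarith
  have hconst : ∀ x, H x = H 0 := fun x =>
    is_const_of_deriv_eq_zero (fun y => (hH' y).differentiableAt) (fun y => (hH' y).deriv) x 0
  have end_limit : ∀ (l : Filter ℝ) [l.NeBot] (u : ℝ),
      (∀ ξ : ℝ → ℝ, (∀ x, ξ x ∈ Set.Ioo x (x + 1)) → Tendsto ξ l l) →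
      Tendsto (fun x : ℝ => x + 1) l l → Tendsto (deriv φ) l (nhds u) →
      c ^ 2 * u - deriv W u = H 0 := by
    intro l _ u hl hshift hu
    have hgu : Tendsto g l (nhds (deriv W u)) :=
      (hW'.tendsto u).comp (tendsto_unit_increment hl hφ1 hu)
    have hHu : Tendsto H l (nhds (c ^ 2 * u - deriv W u)) :=
      ((hu.comp hshift).const_mul (c ^ 2)).sub (tendsto_unit_increment hl hP hgu)
    exact tendsto_nhds_unique hHu (tendsto_const_nhds.congr fun x => (hconst x).symm)
  have h1 := end_limit atBot ul tendsto_mean_point_atBot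
    (tendsto_atBot_add_const_right _ 1 tendsto_id) hl
  have h2 := end_limit atTop ur tendsto_mean_point_atTop
    (tendsto_atTop_add_const_right _ 1 tendsto_id) hr
  linarith
end

section
/- Non-existence of stationary discrete shock waves: let W ∈ C¹(ℝ) and let u_l, u_r ∈ ℝ with W'(u_l) ≠ W'(u_r). Then there is no discrete shock wave of the Newton chain on ℤ associated with (u_l, u_r) having speed c = 0; i.e., there is no φ ∈ C²(ℝ) with 0 = W'(φ(x+1) − φ(x)) − W'(φ(x) − φ(x−1)) for all x ∈ ℝ, φ'(x) → u_l as x → −∞, and φ'(x) → u_r as x → +∞. -/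
/-!
At speed `0` the equation says that the stress `g x = W'(φ (x + 1) - φ x)` is `1`-periodic.
By the mean value theorem `φ (x + 1) - φ x = φ' ξ` for some `ξ ∈ (x, x + 1)`, so the discrete
strain has the same limits `ul`, `ur` at `∓∞` as `φ'`. Since `W'` is continuous, evaluating `g`
along the integers gives `W'(ul) = g 0 = W'(ur)`.
-/

open Filter

/-- **Non-existence of stationary discrete shock waves.**
If `W ∈ C¹(ℝ)` and `W'(u_l) ≠ W'(u_r)`, there is no discrete shock wave of the
Newton chain on `ℤ` associated with `(u_l, u_r)` with speed `c = 0`. -/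
theorem no_stationary_discrete_shock
    (W : ℝ → ℝ) (hW : ContDiff ℝ 1 W)
    (ul ur : ℝ) (hne : deriv W ul ≠ deriv W ur) :
    ¬ ∃ φ : ℝ → ℝ, ContDiff ℝ 2 φ ∧
      (∀ x : ℝ, (0 : ℝ) = deriv W (φ (x + 1) - φ x) - deriv W (φ x - φ (x - 1))) ∧
      Tendsto (deriv φ) atBot (nhds ul) ∧ Tendsto (deriv φ) atTop (nhds ur) := by
  rintro ⟨φ, hφ, heq, hbot, htop⟩
  have hdiff : Differentiable ℝ φ := hφ.differentiable (by norm_num)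
  have hW' : Continuous (deriv W) := hW.continuous_deriv le_rfl
  have hmv : ∀ x : ℝ, ∃ ξ ∈ Set.Ioo x (x + 1), deriv φ ξ = φ (x + 1) - φ x := by
    intro x
    obtain ⟨ξ, hξ, h⟩ := exists_deriv_eq_slope φ (lt_add_one x)
      hdiff.continuous.continuousOn hdiff.differentiableOn
    exact ⟨ξ, hξ, by simpa using h⟩
  choose ξ hξ hφξ using hmv
  have hξtop : Tendsto ξ atTop atTop :=
    tendsto_atTop_mono (fun x => (hξ x).1.le) tendsto_id
  have hξbot : Tendsto ξ atBot atBot :=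
    tendsto_atBot_mono (fun x => (hξ x).2.le) (tendsto_atBot_add_const_right _ 1 tendsto_id)
  have hper : Function.Periodic (fun x => deriv W (deriv φ (ξ x))) 1 := by
    intro x
    have h := heq (x + 1)
    rw [add_sub_cancel_right] at h
    simp only [hφξ]
    linarith
  have hval : ∀ n : ℤ, deriv W (deriv φ (ξ (n : ℝ))) = deriv W (deriv φ (ξ 0)) := by
    intro n
    simpa using hper.int_mul_eq n
  have hr : Tendsto (fun n : ℤ => deriv W (deriv φ (ξ (n : ℝ)))) atTop (nhds (deriv W ur)) :=
    (hW'.tendsto ur).comp (htop.comp (hξtop.comp tendsto_intCast_atTop_atTop))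
  have hl : Tendsto (fun n : ℤ => deriv W (deriv φ (ξ (n : ℝ)))) atBot (nhds (deriv W ul)) :=
    (hW'.tendsto ul).comp (hbot.comp (hξbot.comp (tendsto_intCast_atBot_iff.2 tendsto_id)))
  simp only [hval] at hr hl
  exact hne ((tendsto_nhds_unique hl tendsto_const_nhds).trans
    (tendsto_nhds_unique tendsto_const_nhds hr))
end

section
/- Non-existence of discrete shock waves for strictly convex W': let W ∈ C³(ℝ) with W''(u) ≥ α > 0 for all u and W'''(u) > 0 for all u. Then for every u_l ≠ u_r there is no discrete shock wave of the Newton chain on ℤ associated with (u_l, u_r); that is, there exist no φ ∈ C²(ℝ) and c ∈ ℝ such that c²φ''(x) = W'(φ(x+1) − φ(x)) − W'(φ(x) − φ(x−1)) for all x ∈ ℝ, φ'(x) → u_l as x → −∞, and φ'(x) → u_r as x → +∞ with u_l ≠ u_r. -/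
/-!
Write `r x = φ x - φ (x - 1)` and `w = W' ∘ r`. The travelling-wave equation says
`c² φ'' = w (· + 1) - w`, so `c² φ' - ∫_x^{x+1} w` is constant in `x`. Multiplying the equation by
`φ'` and using `(W ∘ r)' = w · (φ' - φ' (· - 1))` gives a second first integral,
`c² φ'² / 2 + W ∘ r - ∫_x^{x+1} φ' (y - 1) w y dy`. Comparing the limits of both at `±∞` yields
the Rankine–Hugoniot relation `c² (u_r - u_l) = W'(u_r) - W'(u_l)` and, after eliminating `c²`,
`W(u_r) - W(u_l) = (u_r - u_l) (W'(u_r) + W'(u_l)) / 2`. The latter says that the trapezoidal rule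
is exact for `W'` on the interval between the two states, which strict convexity of `W'` forbids.
-/

open Filter

/-- The mean value theorem on `[x, x + 1]`, with all intermediate points chosen at once. -/
lemma exists_mean_value_points {P p : ℝ → ℝ} (h : ∀ x, HasDerivAt P (p x) x) :
    ∃ ξ : ℝ → ℝ, (∀ x, x ≤ ξ x) ∧ (∀ x, ξ x ≤ x + 1) ∧ ∀ x, P (x + 1) - P x = p (ξ x) := by
  have key : ∀ x, ∃ y, x ≤ y ∧ y ≤ x + 1 ∧ P (x + 1) - P x = p y := by
    intro x
    obtain ⟨y, hy, he⟩ := exists_hasDerivAt_eq_slope P p (by linarith : x < x + 1)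
      (fun z _ => (h z).continuousAt.continuousWithinAt) (fun z _ => h z)
    refine ⟨y, hy.1.le, hy.2.le, ?_⟩
    rw [he]; simp
  choose ξ h1 h2 h3 using key
  exact ⟨ξ, h1, h2, h3⟩

lemma tendsto_unit_increment_atTop {P p : ℝ → ℝ} {L : ℝ} (h : ∀ x, HasDerivAt P (p x) x)
    (hp : Tendsto p atTop (nhds L)) :
    Tendsto (fun x => P (x + 1) - P x) atTop (nhds L) := by
  obtain ⟨ξ, h1, -, h3⟩ := exists_mean_value_points h
  simp only [h3]
  exact hp.comp (tendsto_atTop_mono h1 tendsto_id)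

lemma tendsto_unit_increment_atBot {P p : ℝ → ℝ} {L : ℝ} (h : ∀ x, HasDerivAt P (p x) x)
    (hp : Tendsto p atBot (nhds L)) :
    Tendsto (fun x => P (x + 1) - P x) atBot (nhds L) := by
  obtain ⟨ξ, -, h2, h3⟩ := exists_mean_value_points h
  simp only [h3]
  exact hp.comp (tendsto_atBot_mono h2 (tendsto_atBot_add_const_right _ 1 tendsto_id))

lemma exists_antiderivative {p : ℝ → ℝ} (hp : Continuous p) :
    ∃ P : ℝ → ℝ, ∀ x, HasDerivAt P (p x) x :=
  ⟨fun x => ∫ t in (0 : ℝ)..x, p t, fun x => (hp.integral_hasStrictDerivAt 0 x).hasDerivAt⟩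

/-- A conservation law in nonlocal form: if `A' = p (· + 1) - p`, then `A x - ∫_x^{x+1} p` is
constant, so its limits at `±∞` agree. -/
lemma limits_eq_of_deriv_eq_unit_increment {A p : ℝ → ℝ} (hp : Continuous p)
    (hA : ∀ x, HasDerivAt A (p (x + 1) - p x) x) {a b l r : ℝ}
    (hAl : Tendsto A atBot (nhds a)) (hAr : Tendsto A atTop (nhds b))
    (hpl : Tendsto p atBot (nhds l)) (hpr : Tendsto p atTop (nhds r)) :
    a - l = b - r := by
  obtain ⟨P, hP⟩ := exists_antiderivative hp
  have hd : ∀ x, HasDerivAt (fun x => A x - (P (x + 1) - P x)) 0 x := by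
    intro x
    have := (hA x).sub (((hP (x + 1)).comp_add_const x 1).sub (hP x))
    rwa [sub_self] at this
  have hconst : ∀ x, A x - (P (x + 1) - P x) = A 0 - (P (0 + 1) - P 0) := fun x =>
    is_const_of_deriv_eq_zero (f := fun x => A x - (P (x + 1) - P x))
      (fun x => (hd x).differentiableAt) (fun x => (hd x).deriv) x 0
  have hl := hAl.sub (tendsto_unit_increment_atBot hP hpl)
  have hr := hAr.sub (tendsto_unit_increment_atTop hP hpr)
  simp only [hconst] at hl hr
  exact (tendsto_nhds_unique hl tendsto_const_nhds).trans
    (tendsto_nhds_unique tendsto_const_nhds hr)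

/-- Strict convexity of `f'` makes the trapezoidal rule overestimate `∫_a^b f'`. -/
lemma sub_lt_trapezoid {f f' f'' : ℝ → ℝ} (h1 : ∀ x, HasDerivAt f (f' x) x)
    (h2 : ∀ x, HasDerivAt f' (f'' x) x) (hmono : StrictMono f'') {a b : ℝ} (hab : a < b) :
    f b - f a < (b - a) / 2 * (f' b + f' a) := by
  have hd : ∀ u, HasDerivAt (fun u => f u - f a - (u - a) / 2 * (f' u + f' a))
      (f' u - (1 / 2 * (f' u + f' a) + (u - a) / 2 * f'' u)) u := fun u =>
    ((h1 u).sub_const _).sub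
      ((((hasDerivAt_id u).sub_const a).div_const 2).mul ((h2 u).add_const _))
  obtain ⟨u, hu, he⟩ := exists_hasDerivAt_eq_slope _ _ hab
    (fun z _ => (hd z).continuousAt.continuousWithinAt) (fun z _ => hd z)
  obtain ⟨v, hv, hve⟩ := exists_hasDerivAt_eq_slope f' f'' hu.1
    (fun z _ => (h2 z).continuousAt.continuousWithinAt) (fun z _ => h2 z)
  have hua : 0 < u - a := sub_pos.2 hu.1
  have hba : 0 < b - a := sub_pos.2 hab
  rw [eq_div_iff hua.ne'] at hve
  rw [eq_div_iff hba.ne'] at he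
  have hlt := mul_lt_mul_of_pos_right (hmono hv.2) hua
  -- The derivative of the trapezoidal defect at `u` is `(u - a) / 2 * (f'' v - f'' u) < 0`.
  have hneg : f' u - (1 / 2 * (f' u + f' a) + (u - a) / 2 * f'' u) < 0 := by nlinarith
  have := mul_neg_of_neg_of_pos hneg hba
  nlinarith

/-- **Non-existence of discrete shock waves for strictly convex `W'`.**
Let `W ∈ C³(ℝ)` with `W'' ≥ α > 0` and `W''' > 0`. For `u_l ≠ u_r` there is no
travelling-wave profile `φ ∈ C²(ℝ)` and speed `c` with
`c²φ''(x) = W'(φ(x+1) − φ(x)) − W'(φ(x) − φ(x−1))`, `φ' → u_l` at `−∞`, `φ' → u_r` at `+∞`. -/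
theorem no_discrete_shock_convex
    (W : ℝ → ℝ) (hW : ContDiff ℝ 3 W)
    (α : ℝ) (hα : 0 < α) (hW2 : ∀ u : ℝ, α ≤ deriv (deriv W) u)
    (hW3 : ∀ u : ℝ, 0 < deriv (deriv (deriv W)) u)
    (ul ur : ℝ) (hne : ul ≠ ur) :
    ¬ ∃ (φ : ℝ → ℝ) (c : ℝ), ContDiff ℝ 2 φ ∧
      (∀ x : ℝ, c ^ 2 * deriv (deriv φ) x
        = deriv W (φ (x + 1) - φ x) - deriv W (φ x - φ (x - 1))) ∧
      Tendsto (deriv φ) atBot (nhds ul) ∧ Tendsto (deriv φ) atTop (nhds ur) := by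
  rintro ⟨φ, c, hφ, heq, hl, hr⟩
  have hW' : ContDiff ℝ 2 (deriv W) := hW.deriv'
  have hφ' : ContDiff ℝ 1 (deriv φ) := hφ.deriv'
  have dW : ∀ x, HasDerivAt W (deriv W x) x := fun x =>
    (hW.differentiable (by norm_num) x).hasDerivAt
  have dW' : ∀ x, HasDerivAt (deriv W) (deriv (deriv W) x) x := fun x =>
    (hW'.differentiable (by norm_num) x).hasDerivAt
  have dφ : ∀ x, HasDerivAt φ (deriv φ x) x := fun x =>
    (hφ.differentiable (by norm_num) x).hasDerivAt
  have dφ' : ∀ x, HasDerivAt (deriv φ) (deriv (deriv φ) x) x := fun x =>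
    (hφ'.differentiable (by norm_num) x).hasDerivAt
  have cφ : Continuous φ := hφ.continuous
  have cφ' : Continuous (deriv φ) := hφ'.continuous
  have cW : Continuous W := hW.continuous
  have cW' : Continuous (deriv W) := hW'.continuous
  have sBot : Tendsto (fun x : ℝ => x - 1) atBot atBot :=
    tendsto_atBot_add_const_right _ (-1) tendsto_id
  have sTop : Tendsto (fun x : ℝ => x - 1) atTop atTop :=
    tendsto_atTop_add_const_right _ (-1) tendsto_id
  have rl : Tendsto (fun x => φ x - φ (x - 1)) atBot (nhds ul) := by
    have := (tendsto_unit_increment_atBot dφ hl).comp sBot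
    simpa [Function.comp_def] using this
  have rr : Tendsto (fun x => φ x - φ (x - 1)) atTop (nhds ur) := by
    have := (tendsto_unit_increment_atTop dφ hr).comp sTop
    simpa [Function.comp_def] using this
  have wl := (cW'.tendsto ul).comp rl
  have wr := (cW'.tendsto ur).comp rr
  -- Momentum balance, i.e. the Rankine–Hugoniot relation.
  have RH : c ^ 2 * ul - deriv W ul = c ^ 2 * ur - deriv W ur := by
    refine limits_eq_of_deriv_eq_unit_increment (A := fun x => c ^ 2 * deriv φ x)
      (p := fun x => deriv W (φ x - φ (x - 1))) (by fun_prop) (fun x => ?_)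
      (hl.const_mul _) (hr.const_mul _) wl wr
    have := (dφ' x).const_mul (c ^ 2)
    rw [heq x] at this
    simpa using this
  -- Energy balance.
  have EN : (c ^ 2 / 2 * ul ^ 2 + W ul) - ul * deriv W ul
      = (c ^ 2 / 2 * ur ^ 2 + W ur) - ur * deriv W ur := by
    refine limits_eq_of_deriv_eq_unit_increment
      (A := fun x => c ^ 2 / 2 * deriv φ x ^ 2 + W (φ x - φ (x - 1)))
      (p := fun x => deriv φ (x - 1) * deriv W (φ x - φ (x - 1))) (by fun_prop) (fun x => ?_)
      (((hl.pow 2).const_mul _).add ((cW.tendsto ul).comp rl))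
      (((hr.pow 2).const_mul _).add ((cW.tendsto ur).comp rr))
      ((hl.comp sBot).mul wl) ((hr.comp sTop).mul wr)
    have h1 := (((dφ' x).pow 2).const_mul (c ^ 2 / 2)).add
      ((dW (φ x - φ (x - 1))).comp x ((dφ x).sub ((dφ (x - 1)).comp_sub_const x 1)))
    refine h1.congr_deriv ?_
    simp only [add_sub_cancel_right]
    push_cast
    linear_combination (deriv φ x) * heq x
  have hmono : StrictMono (deriv (deriv W)) := strictMono_of_deriv_pos hW3
  have trap : W ur - W ul = (ur - ul) / 2 * (deriv W ur + deriv W ul) := by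
    linear_combination (ur + ul) / 2 * RH - EN
  rcases hne.lt_or_gt with h | h
  · have := sub_lt_trapezoid dW dW' hmono h
    linarith
  · have := sub_lt_trapezoid dW dW' hmono h
    linarith
end
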